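/- arXiv:1805.09689 — 2 statements merged into one kernel-verified Lean document; each statement's English description precedes it below -/
import Mathlib

section
/- The thickness of the complete tripartite graph K_{1,14,14} equals 4. -/
open SimpleGraph

/-- A simple graph is planar if it admits a drawing in the plane: an injective
placement of vertices and, for each edge, an injective continuous arc joining
the images of its endpoints, such that arcs avoid vertex images in their
interiors and distinct arcs meet only at vertex images. -/
def IsPlanar {V : Type*} (G : SimpleGraph V) : Prop :=
  ∃ (f : V → ℝ × ℝ) (γ : G.edgeSet → (Set.Icc (0:ℝ) 1 → ℝ × ℝ)),
    Function.Injective f ∧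
    (∀ e : G.edgeSet, Continuous (γ e)) ∧
    (∀ e : G.edgeSet, ∃ u v : V, (e : Sym2 V) = s(u, v) ∧
      γ e ⟨0, by norm_num⟩ = f u ∧ γ e ⟨1, by norm_num⟩ = f v) ∧
    (∀ e : G.edgeSet, Function.Injective (γ e)) ∧
    (∀ e : G.edgeSet, ∀ t : Set.Icc (0:ℝ) 1, (t : ℝ) ≠ 0 → (t : ℝ) ≠ 1 →
      ∀ v : V, γ e t ≠ f v) ∧
    (∀ e e' : G.edgeSet, e ≠ e' → ∀ s t : Set.Icc (0:ℝ) 1,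
      γ e s = γ e' t → γ e s ∈ Set.range f)

/-- The thickness of a graph: the least `n` such that `G` is the union of `n`
planar subgraphs. -/
noncomputable def thickness {V : Type*} (G : SimpleGraph V) : ℕ :=
  sInf {n : ℕ | ∃ H : Fin n → SimpleGraph V,
    (∀ i, H i ≤ G) ∧ (∀ i, IsPlanar (H i)) ∧ (⨆ i, H i) = G}

/-!
Lower bound. A planar triangle-free graph with `n ≥ 3` vertices has at most `2n - 4` edges, while
`K_{14,14}` has `196 > 3 · 52` edges. The edge bound needs no Jordan curve theorem: a drawing is
thickened to pixels of a fine square grid, which exhibits the graph as a minor of the lattice `ℤ²`.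
The lattice has an algebraic dual, its unit squares, because its chain complex is exact modulo 2,
and algebraic duals pass to minors. Counting dimensions in the dual gives Euler's inequality.

Upper bound. The edges are partitioned explicitly into four straight-line drawings.
-/

section AlgebraicDual

open Finset Module

/-- The mod-2 boundary of an edge: the formal sum of its two ends, which is `0` for a loop. -/
noncomputable def boundary {V : Type*} : Sym2 V → V →₀ ZMod 2 :=
  Sym2.lift ⟨fun a b => Finsupp.single a 1 + Finsupp.single b 1, fun _ _ => add_comm _ _⟩

section Boundary

variable {V W : Type*}

theorem boundary_mk (a b : V) :
    boundary s(a, b) = Finsupp.single a 1 + Finsupp.single b 1 :=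
  rfl

theorem boundary_map (f : V → W) (z : Sym2 V) :
    boundary (z.map f) = Finsupp.mapDomain f (boundary z) := by
  induction z with
  | h a b => simp only [Sym2.map_mk, boundary_mk, Finsupp.mapDomain_add, Finsupp.mapDomain_single]

theorem boundary_mk_add_boundary_mk (a b c : V) :
    boundary s(a, b) + boundary s(b, c) = boundary s(a, c) := by
  simp only [boundary_mk]
  rw [add_assoc, ← add_assoc (Finsupp.single b 1), ZModModule.add_self, zero_add]

theorem boundary_eq_zero_of_isDiag {z : Sym2 V} (h : z.IsDiag) : boundary z = 0 := by
  induction z with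
  | h a b =>
    obtain rfl : a = b := h
    rw [boundary_mk, ← Finsupp.single_add, CharTwo.add_self_eq_zero, Finsupp.single_zero]

theorem boundary_apply_of_notMem {z : Sym2 V} {v : V} (h : v ∉ z) : boundary z v = 0 := by
  induction z with
  | h a b =>
    rw [Sym2.mem_iff, not_or] at h
    simp [boundary_mk, Ne.symm h.1, Ne.symm h.2]

theorem boundary_apply_of_mem {z : Sym2 V} {v : V} (h : v ∈ z) (hz : ¬ z.IsDiag) :
    boundary z v = 1 := by
  induction z with
  | h a b =>
    have hab : a ≠ b := hz
    rcases Sym2.mem_iff.1 h with rfl | rfl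
    · simp [boundary_mk, hab.symm]
    · simp [boundary_mk, hab]

end Boundary

variable {V P Q ι κ : Type*}

/-- The coboundary of a mod-2 function on faces, where edge `i` borders the faces `l i` and
`r i`. -/
def faceCoboundary (l r : ι → Q) : (Q → ZMod 2) →ₗ[ZMod 2] (ι → ZMod 2) :=
  LinearMap.funLeft (ZMod 2) (ZMod 2) l + LinearMap.funLeft (ZMod 2) (ZMod 2) r

theorem faceCoboundary_apply (l r : ι → Q) (φ : Q → ZMod 2) (i : ι) :
    faceCoboundary l r φ i = φ (l i) + φ (r i) :=
  rfl

theorem eq_or_eq_of_faceCoboundary_single_ne_zero [DecidableEq Q] {l r : ι → Q} {q : Q}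
    {i : ι} (h : faceCoboundary l r (Pi.single q 1) i ≠ 0) : q = l i ∨ q = r i := by
  contrapose! h
  rw [faceCoboundary_apply, Pi.single_eq_of_ne h.1.symm, Pi.single_eq_of_ne h.2.symm, add_zero]

variable [Fintype ι] [Fintype κ]

/-- The mod-2 cycle space of the multigraph whose edge `i` has the ends `z i`. -/
noncomputable def cycleSpace (z : ι → Sym2 V) : Submodule (ZMod 2) (ι → ZMod 2) :=
  LinearMap.ker (Fintype.linearCombination (ZMod 2) (boundary ∘ z))

theorem mem_cycleSpace {z : ι → Sym2 V} {w : ι → ZMod 2} :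
    w ∈ cycleSpace z ↔ ∑ i, w i • boundary (z i) = 0 :=
  Iff.rfl

theorem card_lt_finrank_cycleSpace_add_card [Fintype V] [Nonempty V] (z : ι → Sym2 V) :
    Fintype.card ι < finrank (ZMod 2) (cycleSpace z) + Fintype.card V := by
  let total : (V →₀ ZMod 2) →ₗ[ZMod 2] ZMod 2 := Finsupp.linearCombination (ZMod 2) fun _ => 1
  let d := Fintype.linearCombination (ZMod 2) (boundary ∘ z)
  have total_boundary (e : Sym2 V) : total (boundary e) = 0 := by
    induction e with
    | h a b =>
      simp only [total, boundary_mk, map_add, Finsupp.linearCombination_single, smul_eq_mul,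
        mul_one, CharTwo.add_self_eq_zero]
  have range_ne_top : LinearMap.range d ≠ ⊤ := by
    intro htop
    obtain ⟨v⟩ := ‹Nonempty V›
    obtain ⟨w, hw⟩ : Finsupp.single v 1 ∈ LinearMap.range d := htop ▸ Submodule.mem_top
    have hzero : total (d w) = 0 := by
      simp only [d, Fintype.linearCombination_apply, map_sum, map_smul, Function.comp_apply,
        total_boundary, smul_zero, sum_const_zero]
    have hone : total (d w) = 1 := by simp [hw, total]
    exact zero_ne_one (hzero.symm.trans hone)
  have hrange := Submodule.finrank_lt range_ne_top
  have hsum := LinearMap.finrank_range_add_finrank_ker d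
  rw [finrank_finsupp_self] at hrange
  rw [finrank_fintype_fun_eq_card] at hsum
  change Fintype.card ι < finrank (ZMod 2) (LinearMap.ker d) + Fintype.card V
  lia

/-- An algebraic (MacLane–Whitney) dual of the multigraph with edge ends `z`: a connected
multigraph on `Q`, with the same edges and edge `i` joining `l i` and `r i`, whose cut space is the
cycle space of `z`. It plays the role of the face structure of a plane drawing. -/
structure IsAlgebraicDual (z : ι → Sym2 V) (l r : ι → Q) : Prop where
  range_eq : LinearMap.range (faceCoboundary l r) = cycleSpace z
  const_of_ker : ∀ φ, faceCoboundary l r φ = 0 → ∀ p q, φ p = φ q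

namespace IsAlgebraicDual

variable {z : ι → Sym2 V} {l r : ι → Q}

theorem faceCoboundary_mem (h : IsAlgebraicDual z l r) (φ : Q → ZMod 2) :
    faceCoboundary l r φ ∈ cycleSpace z :=
  h.range_eq ▸ LinearMap.mem_range_self _ φ

theorem faceCoboundary_single_ne_zero [DecidableEq Q] [Nontrivial Q] (h : IsAlgebraicDual z l r)
    (q : Q) : faceCoboundary l r (Pi.single q 1) ≠ 0 := by
  intro hzero
  obtain ⟨p, hp⟩ := exists_ne q
  have := h.const_of_ker _ hzero p q
  simp [hp] at this

theorem finite (h : IsAlgebraicDual z l r) : Finite Q := by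
  classical
  cases subsingleton_or_nontrivial Q
  · infer_instance
  · refine Set.finite_univ_iff.1 (((Set.finite_range l).union (Set.finite_range r)).subset ?_)
    intro q _
    obtain ⟨i, hi⟩ := Function.ne_iff.1 (h.faceCoboundary_single_ne_zero q)
    exact (eq_or_eq_of_faceCoboundary_single_ne_zero hi).imp (fun e => ⟨i, e.symm⟩)
      fun e => ⟨i, e.symm⟩

theorem mul_card_le [Fintype Q] [Nontrivial Q] (h : IsAlgebraicDual z l r) {k : ℕ}
    (hk : ∀ w ∈ cycleSpace z, w ≠ 0 → k ≤ #{i | w i ≠ 0}) :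
    k * Fintype.card Q ≤ 2 * Fintype.card ι := by
  classical
  let borders (q : Q) (i : ι) : Prop := faceCoboundary l r (Pi.single q 1) i ≠ 0
  rw [mul_comm k, mul_comm 2]
  refine card_mul_le_card_mul borders (s := univ) (t := univ) (fun q _ => ?_) fun i _ => ?_
  · exact hk _ (h.faceCoboundary_mem _) (h.faceCoboundary_single_ne_zero q)
  · refine (card_le_card fun q hq => ?_).trans (card_le_two (a := l i) (b := r i))
    rw [mem_insert, mem_singleton]
    exact eq_or_eq_of_faceCoboundary_single_ne_zero (mem_filter.1 hq).2

theorem finrank_cycleSpace_lt [Fintype Q] [Nonempty Q] (h : IsAlgebraicDual z l r) :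
    finrank (ZMod 2) (cycleSpace z) < Fintype.card Q := by
  have ker_ne_bot : LinearMap.ker (faceCoboundary l r) ≠ ⊥ := by
    have one_mem : (1 : Q → ZMod 2) ∈ LinearMap.ker (faceCoboundary l r) :=
      funext fun _ => CharTwo.add_self_eq_zero 1
    exact fun hbot => one_ne_zero ((Submodule.mem_bot _).1 (hbot ▸ one_mem))
  have hsum := LinearMap.finrank_range_add_finrank_ker (faceCoboundary l r)
  have hpos := Submodule.one_le_finrank_iff.2 ker_ne_bot
  rw [h.range_eq, finrank_fintype_fun_eq_card] at hsum
  lia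

theorem cycleSpace_eq_bot [Subsingleton Q] (h : IsAlgebraicDual z l r) : cycleSpace z = ⊥ := by
  rw [← h.range_eq, LinearMap.range_eq_bot]
  refine LinearMap.ext fun φ => funext fun i => ?_
  rw [faceCoboundary_apply, Subsingleton.elim (l i) (r i), CharTwo.add_self_eq_zero]
  rfl

/-- Euler's formula `|V| - |ι| + |Q| ≥ 2` combined with `k |Q| ≤ 2 |ι|`; the first alternative is
the case of a forest, which has a single face. -/
theorem card_lt_or_mul_card_le [Fintype V] [Nonempty V] (h : IsAlgebraicDual z l r) {k : ℕ}
    (hk : ∀ w ∈ cycleSpace z, w ≠ 0 → k ≤ #{i | w i ≠ 0}) :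
    Fintype.card ι < Fintype.card V ∨
      k * (Fintype.card ι + 2) ≤ k * Fintype.card V + 2 * Fintype.card ι := by
  have hrank := card_lt_finrank_cycleSpace_add_card z
  cases subsingleton_or_nontrivial Q
  · rw [h.cycleSpace_eq_bot, finrank_bot, zero_add] at hrank
    exact .inl hrank
  · have := h.finite
    have := Fintype.ofFinite Q
    have hfaces := h.finrank_cycleSpace_lt
    have heuler : Fintype.card ι + 2 ≤ Fintype.card V + Fintype.card Q := by lia
    right
    calc k * (Fintype.card ι + 2) ≤ k * (Fintype.card V + Fintype.card Q) := by gcongr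
      _ = k * Fintype.card V + k * Fintype.card Q := mul_add _ _ _
      _ ≤ k * Fintype.card V + 2 * Fintype.card ι := Nat.add_le_add_left (h.mul_card_le hk) _

/-- Contracting a forest, here the edges in `κ`, does not change the dual. -/
theorem contract {z : κ ⊕ ι → Sym2 P} {z' : ι → Sym2 V} {l r : κ ⊕ ι → Q}
    (h : IsAlgebraicDual z l r)
    (hforest : LinearIndependent (ZMod 2) fun k => boundary (z (.inl k)))
    (hcontract : ∀ w, w ∈ cycleSpace z' ↔ ∃ u, Sum.elim u w ∈ cycleSpace z) :
    IsAlgebraicDual z' (l ∘ Sum.inr) (r ∘ Sum.inr) where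
  range_eq := by
    ext w
    rw [hcontract, ← h.range_eq]
    constructor
    · rintro ⟨φ, rfl⟩
      exact ⟨faceCoboundary l r φ ∘ Sum.inl, φ, (Sum.elim_comp_inl_inr _).symm⟩
    · rintro ⟨u, φ, hφ⟩
      exact ⟨φ, funext fun i => congrFun hφ (.inr i)⟩
  const_of_ker φ hφ := by
    have hcycle := mem_cycleSpace.1 (h.faceCoboundary_mem φ)
    have hr (i : ι) : faceCoboundary l r φ (.inr i) = 0 := congrFun hφ i
    simp only [Fintype.sum_sum_type, hr, zero_smul, sum_const_zero, add_zero] at hcycle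
    have hl := Fintype.linearIndependent_iff.1 hforest _ hcycle
    exact h.const_of_ker φ (funext <| Sum.rec hl hr)

end IsAlgebraicDual

end AlgebraicDual

section Lattice

open Finset

/-- The edges of the square lattice on `ℤ × ℤ`: `(p, true)` joins `p` to its right neighbour and
`(p, false)` joins `p` to its upper neighbour. -/
abbrev LatticeEdge := (ℤ × ℤ) × Bool

namespace LatticeEdge

/-- The displacement along a lattice edge of the given direction. -/
def step : Bool → ℤ × ℤ
  | true => (1, 0)
  | false => (0, 1)

/-- The ends of a lattice edge. -/
def ends (e : LatticeEdge) : Sym2 (ℤ × ℤ) :=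
  s(e.1, e.1 + step e.2)

/-- A lattice edge starting at `p` borders two unit squares, named by their lower left corners: one
is `p`, and this is the other one. -/
def otherFace (e : LatticeEdge) : ℤ × ℤ :=
  e.1 - step (!e.2)

theorem linearCombination_boundary_ends_apply (Z : LatticeEdge →₀ ZMod 2) (a b : ℤ) :
    Finsupp.linearCombination (ZMod 2) (boundary ∘ ends) Z (a, b) =
      Z ((a, b), true) + Z ((a - 1, b), true) + Z ((a, b), false) + Z ((a, b - 1), false) := by
  induction Z using Finsupp.induction_linear with
  | zero => simp
  | add Z Z' hZ hZ' =>
    rw [map_add, Finsupp.add_apply, hZ, hZ']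
    simp only [Finsupp.add_apply]
    ring
  | single e c =>
    obtain ⟨⟨x, y⟩, d⟩ := e
    cases d <;> simp [ends, step, boundary_mk, Finsupp.single_apply, eq_sub_iff_add_eq]

theorem linearCombination_boundary_ends_eq_zero {φ : ℤ × ℤ → ZMod 2} {Z : LatticeEdge →₀ ZMod 2}
    (h : faceCoboundary Prod.fst otherFace φ = Z) :
    Finsupp.linearCombination (ZMod 2) (boundary ∘ ends) Z = 0 := by
  ext ⟨a, b⟩
  have square (x : ZMod 2) : x + x = 0 := CharTwo.add_self_eq_zero x
  rw [linearCombination_boundary_ends_apply, ← h]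
  simp only [faceCoboundary_apply, otherFace, step, Bool.not_true, Bool.not_false, Prod.mk_sub_mk,
    sub_zero, Finsupp.zero_apply]
  linear_combination square (φ (a, b)) + square (φ (a, b - 1)) + square (φ (a - 1, b)) +
    square (φ (a - 1, b - 1))

theorem exists_forall_lt_apply_eq_zero (Z : LatticeEdge →₀ ZMod 2) :
    ∃ M : ℤ, ∀ a b d, b < M → Z ((a, b), d) = 0 := by
  obtain ⟨M, hM⟩ := (Z.support.image fun e => e.1.2).bddBelow
  refine ⟨M, fun a b d hb => ?_⟩
  by_contra hne
  exact hb.not_ge (hM (mem_image_of_mem _ (Finsupp.mem_support_iff.2 hne)))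

theorem exists_faceCoboundary_eq {Z : LatticeEdge →₀ ZMod 2}
    (hZ : Finsupp.linearCombination (ZMod 2) (boundary ∘ ends) Z = 0) :
    ∃ φ : ℤ × ℤ → ZMod 2, faceCoboundary Prod.fst otherFace φ = Z := by
  obtain ⟨M, hM⟩ := exists_forall_lt_apply_eq_zero Z
  have closed (a b : ℤ) : Z ((a, b), true) + Z ((a - 1, b), true) + Z ((a, b), false) +
      Z ((a, b - 1), false) = 0 := by
    rw [← linearCombination_boundary_ends_apply, hZ, Finsupp.zero_apply]
  -- The unique potential vanishing below the support of `Z`.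
  let φ : ℤ × ℤ → ZMod 2 := fun p => ∑ k ∈ Ico M (p.2 + 1), Z ((p.1, k), true)
  have φ_low (a b : ℤ) (hb : b < M) : φ (a, b) = 0 := by
    simp only [φ, Ico_eq_empty_of_le (show b + 1 ≤ M from hb), sum_empty]
  have horizontal (a b : ℤ) : φ (a, b) + φ (a, b - 1) = Z ((a, b), true) := by
    rcases lt_or_ge b M with hb | hb
    · rw [φ_low a b hb, φ_low a _ (by lia), hM _ _ _ hb, add_zero]
    · have hIco : Ico M (b + 1) = insert b (Ico M b) := by
        ext k
        simp only [mem_Ico, mem_insert]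
        lia
      simp only [φ, sub_add_cancel, hIco, sum_insert right_notMem_Ico]
      linear_combination CharTwo.add_self_eq_zero (∑ k ∈ Ico M b, Z ((a, k), true))
  have vertical (a b : ℤ) : φ (a, b) + φ (a - 1, b) = Z ((a, b), false) := by
    have below (b : ℤ) (hb : b < M) : φ (a, b) + φ (a - 1, b) = Z ((a, b), false) := by
      rw [φ_low _ _ hb, φ_low _ _ hb, hM _ _ _ hb, add_zero]
    rcases lt_or_ge b (M - 1) with hb | hb
    · exact below b (by lia)
    induction b, hb using Int.leInduction with
    | base => exact below _ (by lia)
    | succ b _ ih =>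
      have hc := closed a (b + 1)
      have hl := horizontal a (b + 1)
      have hr := horizontal (a - 1) (b + 1)
      rw [add_sub_cancel_right] at hc hl hr
      linear_combination hl + hr + hc + ih -
        CharTwo.add_self_eq_zero (Z ((a, b + 1), false)) -
        CharTwo.add_self_eq_zero (φ (a, b) + φ (a - 1, b))
  refine ⟨φ, funext ?_⟩
  rintro ⟨⟨a, b⟩, _ | _⟩
  · simpa [faceCoboundary_apply, otherFace, step] using vertical a b
  · simpa [faceCoboundary_apply, otherFace, step] using horizontal a b

theorem eq_of_faceCoboundary_eq_zero {φ : ℤ × ℤ → ZMod 2}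
    (h : faceCoboundary Prod.fst otherFace φ = 0) (p q : ℤ × ℤ) : φ p = φ q := by
  have face_eq (e : LatticeEdge) : φ e.1 = φ (otherFace e) :=
    CharTwo.add_eq_zero.1 (congrFun h e)
  have vertical (a b : ℤ) : φ (a, b) = φ (a, 0) := by
    have hstep : Function.Periodic (fun b => φ (a, b)) 1 := fun b => by
      simpa [otherFace, step] using face_eq ((a, b + 1), true)
    simpa using hstep.int_mul b 0
  have horizontal (a : ℤ) : φ (a, 0) = φ (0, 0) := by
    have hstep : Function.Periodic (fun a => φ (a, 0)) 1 := fun a => by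
      simpa [otherFace, step] using face_eq ((a + 1, 0), false)
    simpa using hstep.int_mul a 0
  obtain ⟨a, b⟩ := p
  obtain ⟨c, d⟩ := q
  rw [vertical a b, horizontal a, vertical c d, horizontal c]

end LatticeEdge

open LatticeEdge

/-- The faces of the subgraph of the square lattice with edges `j i`: unit squares, glued along
every lattice edge that is absent from the subgraph. -/
abbrev LatticeFace {ι : Type*} (j : ι → LatticeEdge) : Type :=
  Quot fun p q => ∃ e ∉ Set.range j, e.1 = p ∧ otherFace e = q

section LatticeFace

variable {ι : Type*} {j : ι → LatticeEdge}

theorem faceCoboundary_comp_mk_eq_zero (φ : LatticeFace j → ZMod 2) {e : LatticeEdge}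
    (he : e ∉ Set.range j) : faceCoboundary Prod.fst otherFace (φ ∘ Quot.mk _) e = 0 :=
  CharTwo.add_eq_zero.2 (congrArg φ (Quot.sound ⟨e, he, rfl, rfl⟩))

theorem eq_of_latticeFace_faceCoboundary_eq_zero {φ : LatticeFace j → ZMod 2}
    (hφ : faceCoboundary (fun i => Quot.mk _ (j i).1) (fun i => Quot.mk _ (otherFace (j i))) φ = 0)
    (p q : LatticeFace j) : φ p = φ q := by
  have hzero : faceCoboundary Prod.fst otherFace (φ ∘ Quot.mk _) = 0 := by
    funext e
    by_cases he : e ∈ Set.range j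
    · obtain ⟨i, rfl⟩ := he
      exact congrFun hφ i
    · exact faceCoboundary_comp_mk_eq_zero φ he
  exact Quot.induction_on₂ p q fun p q => eq_of_faceCoboundary_eq_zero hzero p q

end LatticeFace

variable {ι V : Type*} [Fintype ι]

theorem comp_mem_cycleSpace_iff {κ : Type*} {z : κ → Sym2 V} {j : ι → κ} {w : ι → ZMod 2} :
    w ∈ cycleSpace (z ∘ j) ↔ Finsupp.linearCombination (ZMod 2) (boundary ∘ z)
      (((Finsupp.linearEquivFunOnFinite (ZMod 2) (ZMod 2) ι).symm w).mapDomain j) = 0 := by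
  rw [Finsupp.linearCombination_mapDomain,
    Finsupp.linearCombination_eq_fintype_linearCombination_apply]
  rfl

theorem isAlgebraicDual_latticeFace {j : ι → LatticeEdge} (hj : Function.Injective j) :
    IsAlgebraicDual (ends ∘ j) (fun i => (Quot.mk _ (j i).1 : LatticeFace j))
      fun i => Quot.mk _ (otherFace (j i)) := by
  let extend (w : ι → ZMod 2) : LatticeEdge →₀ ZMod 2 :=
    ((Finsupp.linearEquivFunOnFinite (ZMod 2) (ZMod 2) ι).symm w).mapDomain j
  have mem_iff (w : ι → ZMod 2) : w ∈ cycleSpace (ends ∘ j) ↔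
      Finsupp.linearCombination (ZMod 2) (boundary ∘ ends) (extend w) = 0 :=
    comp_mem_cycleSpace_iff
  have extend_apply (w : ι → ZMod 2) (i : ι) : extend w (j i) = w i :=
    Finsupp.mapDomain_apply hj _ _
  have extend_notMem (w : ι → ZMod 2) {e : LatticeEdge} (he : e ∉ Set.range j) : extend w e = 0 :=
    Finsupp.mapDomain_of_notMem_range _ _ he
  refine ⟨?_, fun φ hφ => eq_of_latticeFace_faceCoboundary_eq_zero hφ⟩
  ext w
  rw [mem_iff]
  constructor
  · rintro ⟨φ, rfl⟩
    refine linearCombination_boundary_ends_eq_zero (φ := φ ∘ Quot.mk _) (funext fun e => ?_)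
    by_cases he : e ∈ Set.range j
    · obtain ⟨i, rfl⟩ := he
      rw [extend_apply]
      rfl
    · rw [faceCoboundary_comp_mk_eq_zero φ he]
      exact (extend_notMem _ he).symm
  · intro hw
    obtain ⟨φ, hφ⟩ := exists_faceCoboundary_eq hw
    have hlift (p q : ℤ × ℤ) : (∃ e ∉ Set.range j, e.1 = p ∧ otherFace e = q) → φ p = φ q := by
      rintro ⟨e, he, rfl, rfl⟩
      exact CharTwo.add_eq_zero.1 ((congrFun hφ e).trans (extend_notMem w he))
    exact ⟨Quot.lift φ hlift, funext fun i => (congrFun hφ (j i)).trans (extend_apply w i)⟩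

end Lattice

section Contraction

variable {V P ι κ : Type*} [Fintype ι] [Fintype κ]

theorem boundary_mem_span_of_map_label {s : Set (P →₀ ZMod 2)} {label : P → Option V}
    (hlabel : ∀ p q v, label p = some v → label q = some v →
      boundary s(p, q) ∈ Submodule.span (ZMod 2) s)
    {f : P → P} (hf : ∀ p, label (f p) = label p) {e : Sym2 P} {e' : Sym2 V}
    (he : e.map label = e'.map some) :
    boundary e + boundary (e.map f) ∈ Submodule.span (ZMod 2) s := by
  have labelled (p : P) (hp : p ∈ e) : boundary s(p, f p) ∈ Submodule.span (ZMod 2) s := by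
    obtain ⟨v, -, hv⟩ := Sym2.mem_map.1 (he ▸ Sym2.mem_map.2 ⟨p, hp, rfl⟩ : label p ∈ e'.map some)
    exact hlabel p (f p) v hv.symm ((hf p).trans hv.symm)
  induction e with
  | h p q =>
    have hsum := add_mem (labelled p (Sym2.mem_mk_left p q)) (labelled q (Sym2.mem_mk_right p q))
    simp only [Sym2.map_mk, boundary_mk] at hsum ⊢
    rwa [add_add_add_comm]

/-- Let the edges in `κ` join equally labelled points and the edge `i` have ends with the labels
`z' i`. If equally labelled points are connected by edges in `κ`, then every cycle of the
contracted multigraph `z'` lifts. -/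
theorem mem_cycleSpace_iff_exists_sumElim {z : κ ⊕ ι → Sym2 P} {z' : ι → Sym2 V} [Nonempty P]
    {label : P → Option V} (hinner : ∀ k, ((z (.inl k)).map label).IsDiag)
    (houter : ∀ i, (z (.inr i)).map label = (z' i).map some)
    (hlabel : ∀ p q v, label p = some v → label q = some v →
      boundary s(p, q) ∈ Submodule.span (ZMod 2) (Set.range fun k => boundary (z (.inl k))))
    (w : ι → ZMod 2) : w ∈ cycleSpace z' ↔ ∃ u, Sum.elim u w ∈ cycleSpace z := by
  have map_label_sum : Finsupp.lmapDomain (ZMod 2) (ZMod 2) label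
      (∑ i, w i • boundary (z (.inr i))) =
        Finsupp.lmapDomain (ZMod 2) (ZMod 2) some (∑ i, w i • boundary (z' i)) := by
    simp only [map_sum, map_smul, Finsupp.lmapDomain_apply, ← boundary_map, houter]
  simp only [mem_cycleSpace, Fintype.sum_sum_type, Sum.elim_inl, Sum.elim_inr]
  constructor
  · intro hw
    rw [hw, map_zero] at map_label_sum
    let pick : Option V → P := Function.invFun label
    have retract (p : P) : label ((pick ∘ label) p) = label p := Function.invFun_eq ⟨p, rfl⟩
    have hspan : ∑ i, w i • boundary (z (.inr i)) ∈
        Submodule.span (ZMod 2) (Set.range fun k => boundary (z (.inl k))) := by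
      have hzero := congrArg (Finsupp.lmapDomain (ZMod 2) (ZMod 2) pick) map_label_sum
      simp only [map_sum, map_smul, map_zero, Finsupp.lmapDomain_apply, ← boundary_map,
        Sym2.map_map] at hzero
      rw [← add_zero (∑ i, _), ← hzero, ← Finset.sum_add_distrib]
      refine sum_mem fun i _ => ?_
      rw [← smul_add]
      exact Submodule.smul_mem _ _ (boundary_mem_span_of_map_label hlabel retract (houter i))
    obtain ⟨u, hu⟩ := (Submodule.mem_span_range_iff_exists_fun _).1 hspan
    exact ⟨u, by rw [hu, ← two_nsmul, ZModModule.char_nsmul_eq_zero]⟩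
  · rintro ⟨u, hu⟩
    have hcycle := congrArg (Finsupp.lmapDomain (ZMod 2) (ZMod 2) label) hu
    have hforest : Finsupp.lmapDomain (ZMod 2) (ZMod 2) label
        (∑ k, u k • boundary (z (.inl k))) = 0 := by
      simp only [map_sum, map_smul, Finsupp.lmapDomain_apply, ← boundary_map,
        boundary_eq_zero_of_isDiag (hinner _), smul_zero, Finset.sum_const_zero]
    rw [map_add, hforest, zero_add, map_zero, map_label_sum] at hcycle
    exact Finsupp.mapDomain_injective (Option.some_injective V)
      (hcycle.trans Finsupp.mapDomain_zero.symm)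

end Contraction

section LatticeMinor

open LatticeEdge Relation

/-- Adjacency in the square lattice. -/
def LatticeAdj (p q : ℤ × ℤ) : Prop :=
  s(p, q) ∈ Set.range ends

/-- Connectedness of two points by a path of the square lattice with all its edges inside `S`. -/
def LatticeJoined (S : Set (ℤ × ℤ)) : ℤ × ℤ → ℤ × ℤ → Prop :=
  ReflTransGen fun p q => LatticeAdj p q ∧ p ∈ S ∧ q ∈ S

theorem LatticeAdj.symm {p q : ℤ × ℤ} (h : LatticeAdj p q) : LatticeAdj q p :=
  show s(q, p) ∈ Set.range ends from Sym2.eq_swap ▸ h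

namespace LatticeJoined

variable {S T : Set (ℤ × ℤ)} {p q : ℤ × ℤ}

theorem symm (h : LatticeJoined S p q) : LatticeJoined S q p := by
  induction h with
  | refl => exact .refl
  | tail _ hab ih => exact .head ⟨hab.1.symm, hab.2.2, hab.2.1⟩ ih

theorem mono (hST : S ⊆ T) (h : LatticeJoined S p q) : LatticeJoined T p q :=
  ReflTransGen.mono (fun _ _ h => ⟨h.1, hST h.2.1, hST h.2.2⟩) _ _ h

theorem exists_latticeAdj_exit (h : LatticeJoined S p q) (hp : p ∈ T) (hq : q ∉ T) :
    ∃ a ∈ T, ∃ b ∉ T, LatticeAdj a b ∧ a ∈ S ∧ b ∈ S := by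
  induction h with
  | refl => exact absurd hp hq
  | @tail a b _ hab ih =>
    by_cases ha : a ∈ T
    · exact ⟨a, ha, b, hq, hab⟩
    · exact ih ha

theorem boundary_mem_span (h : LatticeJoined S p q) :
    boundary s(p, q) ∈
      Submodule.span (ZMod 2) ((boundary ∘ ends) '' {e | ∀ x ∈ ends e, x ∈ S}) := by
  induction h with
  | refl =>
    rw [boundary_eq_zero_of_isDiag (Sym2.mk_isDiag_iff.2 rfl)]
    exact zero_mem _
  | @tail a b _ hab ih =>
    obtain ⟨⟨e, he⟩, ha, hb⟩ := hab
    have hedge : boundary s(a, b) ∈ Submodule.span (ZMod 2)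
        ((boundary ∘ ends) '' {e | ∀ x ∈ ends e, x ∈ S}) := by
      refine Submodule.subset_span ⟨e, fun x hx => ?_, congrArg boundary he⟩
      rw [he, Sym2.mem_iff] at hx
      rcases hx with rfl | rfl <;> assumption
    exact boundary_mk_add_boundary_mk p a b ▸ add_mem ih hedge

end LatticeJoined

/-- Connectedness of a set of points in the square lattice; the empty set counts as connected. -/
def IsLatticeConnected (S : Set (ℤ × ℤ)) : Prop :=
  ∀ p ∈ S, ∀ q ∈ S, LatticeJoined S p q

variable {V : Type*} {G : SimpleGraph V} {D : V → Set (ℤ × ℤ)}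

/-- `G` is a minor of the square lattice, with branch sets `D`. Branch sets of isolated vertices may
be empty. -/
structure IsLatticeMinor (G : SimpleGraph V) (D : V → Set (ℤ × ℤ)) : Prop where
  disjoint : Pairwise (Function.onFun Disjoint D)
  finite : ∀ v, (D v).Finite
  connected : ∀ v, IsLatticeConnected (D v)
  exists_latticeAdj : ∀ u v, G.Adj u v → ∃ p ∈ D u, ∃ q ∈ D v, LatticeAdj p q

theorem exists_label_of_pairwise_disjoint {P : Type*} {D : V → Set P}
    (h : Pairwise (Function.onFun Disjoint D)) :
    ∃ label : P → Option V, ∀ p v, label p = some v ↔ p ∈ D v := by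
  classical
  refine ⟨fun p => if hp : ∃ v, p ∈ D v then some hp.choose else none, fun p v => ?_⟩
  by_cases hp : ∃ v, p ∈ D v
  · simp only [dif_pos hp]
    rw [Option.some.injEq]
    exact ⟨fun hv => hv ▸ hp.choose_spec,
      fun hv => h.eq (Set.not_disjoint_iff.2 ⟨p, hp.choose_spec, hv⟩)⟩
  · simp only [dif_neg hp, reduceCtorEq, false_iff]
    exact fun hv => hp ⟨v, hv⟩

/-- The lattice edges inside the branch sets. -/
def branchEdges (D : V → Set (ℤ × ℤ)) : Set LatticeEdge :=
  ⋃ v, {e | ∀ x ∈ ends e, x ∈ D v}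

theorem IsLatticeMinor.finite_branchEdges [Finite V] (h : IsLatticeMinor G D) :
    (branchEdges D).Finite := by
  refine Set.finite_iUnion fun v => ((h.finite v).prod Set.finite_univ).subset fun e he => ?_
  exact ⟨he _ (Sym2.mem_mk_left _ _), trivial⟩

theorem map_label_isDiag_of_mem_branchEdges {label : ℤ × ℤ → Option V}
    (hlabel : ∀ p v, label p = some v ↔ p ∈ D v) {e : LatticeEdge} (he : e ∈ branchEdges D) :
    ((ends e).map label).IsDiag := by
  obtain ⟨v, hv⟩ := Set.mem_iUnion.1 he
  exact ((hlabel _ v).2 (hv _ (Sym2.mem_mk_left _ _))).trans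
    ((hlabel _ v).2 (hv _ (Sym2.mem_mk_right _ _))).symm

theorem IsLatticeMinor.exists_ends_map_label_eq (h : IsLatticeMinor G D)
    {label : ℤ × ℤ → Option V} (hlabel : ∀ p v, label p = some v ↔ p ∈ D v) (e : G.edgeSet) :
    ∃ ε : LatticeEdge, (ends ε).map label = e.1.map some := by
  obtain ⟨⟨u, v⟩, huv⟩ := e
  obtain ⟨p, hp, q, hq, ε, hε⟩ := h.exists_latticeAdj u v huv
  exact ⟨ε, by rw [hε]; simp only [Sym2.map_mk, (hlabel _ _).2 hp, (hlabel _ _).2 hq]⟩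

theorem IsLatticeMinor.exists_isAlgebraicDual [Finite V] [Fintype G.edgeSet]
    (h : IsLatticeMinor G D) :
    ∃ (Q : Type) (l r : G.edgeSet → Q), IsAlgebraicDual ((↑) : G.edgeSet → Sym2 V) l r := by
  obtain ⟨label, hlabel⟩ := exists_label_of_pairwise_disjoint h.disjoint
  obtain ⟨κ, a, ha, hspan, hforest⟩ :=
    exists_linearIndependent' (ZMod 2) fun e : branchEdges D => boundary (ends e)
  have := h.finite_branchEdges.to_subtype
  have := Finite.of_injective a ha
  have := Fintype.ofFinite κ
  choose ε hε using h.exists_ends_map_label_eq hlabel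
  let j : κ ⊕ G.edgeSet → LatticeEdge := Sum.elim (fun k => a k) ε
  have inner_isDiag (k : κ) : ((ends (a k)).map label).IsDiag :=
    map_label_isDiag_of_mem_branchEdges hlabel (a k).2
  have outer_not_isDiag (e : G.edgeSet) : ¬ ((ends (ε e)).map label).IsDiag := by
    rw [hε, Sym2.isDiag_map (Option.some_injective V)]
    exact G.not_isDiag_of_mem_edgeSet e.2
  have hj : Function.Injective j := by
    refine (Subtype.val_injective.comp ha).sumElim (fun e e' hee' => ?_) fun k e hke => ?_
    · refine Subtype.ext (Sym2.map.injective (Option.some_injective V) ?_)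
      rw [← hε, ← hε, hee']
    · exact outer_not_isDiag e (hke ▸ inner_isDiag k)
  refine ⟨LatticeFace j, _, _, (isAlgebraicDual_latticeFace hj).contract hforest
    (mem_cycleSpace_iff_exists_sumElim inner_isDiag hε fun p q v hp hq => ?_)⟩
  have hpq := (h.connected v p ((hlabel p v).1 hp) q ((hlabel q v).1 hq)).boundary_mem_span
  change _ ∈ Submodule.span (ZMod 2)
    (Set.range ((fun e : branchEdges D => boundary (ends e)) ∘ a))
  rw [hspan]
  refine Submodule.span_mono ?_ hpq
  rintro _ ⟨e, he, rfl⟩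
  exact ⟨⟨e, Set.mem_iUnion.2 ⟨v, he⟩⟩, rfl⟩

end LatticeMinor

section HalfArcs

open Relation

/-- The incidence structure of a drawing in which every edge `e` is cut into the two half-arcs
`arm e false` and `arm e true`, ending at the vertices `tip e false` and `tip e true`: half-arcs of
different edges may only meet if they end at the same vertex. -/
structure IsHalfArcDrawing {E V X : Type*} (tip : E → Bool → V) (point : V → X)
    (arm : E → Bool → Set X) : Prop where
  tip_ne : ∀ e, tip e false ≠ tip e true
  point_mem : ∀ e b, point (tip e b) ∈ arm e b
  eq_tip : ∀ e b v, point v ∈ arm e b → v = tip e b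
  inter_nonempty : ∀ e, (arm e false ∩ arm e true).Nonempty
  disjoint : ∀ e e' b b', e ≠ e' → tip e b ≠ tip e' b' → Disjoint (arm e b) (arm e' b')

theorem LatticeJoined.mem {S : Set (ℤ × ℤ)} {p q : ℤ × ℤ} (h : LatticeJoined S p q) (hp : p ∈ S) :
    q ∈ S := by
  rcases ReflTransGen.cases_tail h with rfl | ⟨_, -, hq⟩
  exacts [hp, hq.2.2]

theorem isLatticeConnected_of_joined {S : Set (ℤ × ℤ)} {p : ℤ × ℤ}
    (h : ∀ q ∈ S, LatticeJoined S p q) : IsLatticeConnected S :=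
  fun q hq r hr => (h q hq).symm.trans (h r hr)

theorem isLatticeConnected_setOf_joined (S : Set (ℤ × ℤ)) (p : ℤ × ℤ) :
    IsLatticeConnected {q | LatticeJoined S p q} := by
  refine isLatticeConnected_of_joined (p := p) fun q hq => ?_
  change LatticeJoined S p q at hq
  induction hq with
  | refl => exact .refl
  | tail hpa hab ih => exact ih.tail ⟨hab.1, hpa, hpa.tail hab⟩

theorem IsLatticeConnected.exists_subset_sdiff {S T : Set (ℤ × ℤ)} (hS : IsLatticeConnected S)
    {p : ℤ × ℤ} (hpS : p ∈ S) (hpT : p ∉ T) (hST : (S ∩ T).Nonempty) :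
    ∃ R ⊆ S \ T, p ∈ R ∧ IsLatticeConnected R ∧ ∃ a ∈ R, ∃ b ∈ T, LatticeAdj a b := by
  let R := {q | LatticeJoined (S \ T) p q}
  have hR : R ⊆ S \ T := fun q hq => LatticeJoined.mem hq ⟨hpS, hpT⟩
  refine ⟨R, hR, ReflTransGen.refl, isLatticeConnected_setOf_joined _ _, ?_⟩
  obtain ⟨q, hqS, hqT⟩ := hST
  obtain ⟨a, haR, b, hbR, hab, -, hbS⟩ :=
    (hS p hpS q hqS).exists_latticeAdj_exit (T := R) ReflTransGen.refl fun hq => (hR hq).2 hqT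
  refine ⟨a, haR, b, by_contra fun hbT => hbR ?_, hab⟩
  exact haR.tail ⟨hab, hR haR, hbS, hbT⟩

theorem isLatticeConnected_biUnion {ι : Type*} {s : Set ι} {R : ι → Set (ℤ × ℤ)} {p : ℤ × ℤ}
    (hR : ∀ i ∈ s, IsLatticeConnected (R i)) (hp : ∀ i ∈ s, p ∈ R i) :
    IsLatticeConnected (⋃ i ∈ s, R i) := by
  refine isLatticeConnected_of_joined (p := p) fun q hq => ?_
  obtain ⟨i, hi, hq⟩ := Set.mem_iUnion₂.1 hq
  exact (hR i hi p (hp i hi) q hq).mono (Set.subset_biUnion_of_mem hi)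

variable {E V : Type*} {G : SimpleGraph V} {tip : E → Bool → V}

theorem IsHalfArcDrawing.exists_disjoint_halves {point : V → ℤ × ℤ}
    {arm : E → Bool → Set (ℤ × ℤ)} (h : IsHalfArcDrawing tip point arm)
    (hconn : ∀ e b, IsLatticeConnected (arm e b)) :
    ∃ half : E → Bool → Set (ℤ × ℤ), (∀ e b, half e b ⊆ arm e b) ∧
      (∀ e b, point (tip e b) ∈ half e b) ∧ (∀ e b, IsLatticeConnected (half e b)) ∧
      (∀ e, Disjoint (half e false) (half e true)) ∧
      ∀ e, ∃ p ∈ half e false, ∃ q ∈ half e true, LatticeAdj p q := by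
  have trim (e : E) : ∃ R ⊆ arm e false \ arm e true, point (tip e false) ∈ R ∧
      IsLatticeConnected R ∧ ∃ p ∈ R, ∃ q ∈ arm e true, LatticeAdj p q :=
    (hconn e false).exists_subset_sdiff (h.point_mem e false)
      (fun hmem => h.tip_ne e (h.eq_tip e true _ hmem)) (h.inter_nonempty e)
  choose R hsub hpoint hR hadj using trim
  have hsub_arm (e : E) : R e ⊆ arm e false := (hsub e).trans Set.sdiff_subset
  have hdisj (e : E) : Disjoint (R e) (arm e true) :=
    Set.disjoint_of_subset_left (hsub e) Set.disjoint_sdiff_left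
  exact ⟨fun e => Bool.rec (R e) (arm e true), fun e => Bool.rec (hsub_arm e) subset_rfl,
    fun e => Bool.rec (hpoint e) (h.point_mem e true),
    fun e => Bool.rec (hR e) (hconn e true), hdisj, hadj⟩

theorem IsHalfArcDrawing.exists_isLatticeMinor [Finite E] {point : V → ℤ × ℤ}
    {arm : E → Bool → Set (ℤ × ℤ)} (h : IsHalfArcDrawing tip point arm)
    (hfinite : ∀ e b, (arm e b).Finite) (hconn : ∀ e b, IsLatticeConnected (arm e b))
    (hG : ∀ e : G.edgeSet, ∃ i, s(tip i false, tip i true) = e) :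
    ∃ D, IsLatticeMinor G D := by
  obtain ⟨half, hsub, hpoint, hhalf, hdisj, hadj⟩ := h.exists_disjoint_halves hconn
  let D (v : V) : Set (ℤ × ℤ) := ⋃ i ∈ {i : E × Bool | tip i.1 i.2 = v}, half i.1 i.2
  have half_subset (e : E) (b : Bool) : half e b ⊆ D (tip e b) :=
    Set.subset_biUnion_of_mem (u := fun i : E × Bool => half i.1 i.2) (x := (e, b)) rfl
  have halves_disjoint (e e' : E) (b b' : Bool) (hne : tip e b ≠ tip e' b') :
      Disjoint (half e b) (half e' b') := by
    by_cases hee' : e = e'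
    · subst hee'
      cases b <;> cases b'
      exacts [absurd rfl hne, hdisj e, (hdisj e).symm, absurd rfl hne]
    · exact (h.disjoint e e' b b' hee' hne).mono (hsub e b) (hsub e' b')
  refine ⟨D, fun u v huv => ?_, fun v => ?_, fun v => ?_, fun u v huv => ?_⟩
  · simp only [Function.onFun, D, Set.disjoint_iUnion_left, Set.disjoint_iUnion_right]
    rintro ⟨e, b⟩ rfl ⟨e', b'⟩ rfl
    exact halves_disjoint _ _ _ _ huv
  · exact (Set.toFinite _).biUnion fun i _ => (hfinite i.1 i.2).subset (hsub i.1 i.2)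
  · exact isLatticeConnected_biUnion (fun i _ => hhalf i.1 i.2)
      fun i (hi : _ = v) => hi ▸ hpoint i.1 i.2
  · obtain ⟨e, he⟩ := hG ⟨s(u, v), huv⟩
    obtain ⟨p, hp, q, hq, hpq⟩ := hadj e
    replace hp := half_subset e false hp
    replace hq := half_subset e true hq
    rcases Sym2.eq_iff.1 he with ⟨rfl, rfl⟩ | ⟨rfl, rfl⟩
    · exact ⟨p, hp, q, hq, hpq⟩
    · exact ⟨q, hq, p, hp, hpq.symm⟩

end HalfArcs

section Discretization

open Metric Filter Topology

/-- The plane point with integer coordinates `m` in the square grid of mesh `η`. -/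
def gridPoint (η : ℝ) (m : ℤ × ℤ) : ℝ × ℝ :=
  (η * m.1, η * m.2)

/-- The grid points at sup-distance less than `η` from `S`: a pixel image of `S`. -/
def pixels (η : ℝ) (S : Set (ℝ × ℝ)) : Set (ℤ × ℤ) :=
  gridPoint η ⁻¹' thickening η S

variable {η : ℝ} {S T : Set (ℝ × ℝ)} {m n : ℤ × ℤ} {s : ℝ × ℝ}

theorem pixels_mono (h : S ⊆ T) : pixels η S ⊆ pixels η T :=
  Set.preimage_mono (thickening_subset_of_subset η h)

theorem mem_pixels_iff_exists : m ∈ pixels η S ↔ ∃ s ∈ S, m ∈ pixels η {s} := by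
  simp only [pixels, Set.mem_preimage, mem_thickening_iff, Set.mem_singleton_iff, exists_eq_left]

theorem mem_pixels_singleton :
    m ∈ pixels η {s} ↔ dist (η * m.1) s.1 < η ∧ dist (η * m.2) s.2 < η := by
  rw [pixels, Set.mem_preimage, thickening_singleton, Metric.mem_ball, Prod.dist_eq, max_lt_iff]
  rfl

theorem pixels_singleton_nonempty (hη : 0 < η) (s : ℝ × ℝ) : (pixels η {s}).Nonempty := by
  have floor_close (x : ℝ) : dist (η * ⌊x / η⌋) x < η := by
    have hle := Int.floor_le (x / η)
    have hlt := Int.lt_floor_add_one (x / η)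
    rw [le_div_iff₀ hη] at hle
    rw [div_lt_iff₀ hη] at hlt
    rw [Real.dist_eq, abs_lt]
    constructor <;> linarith
  exact ⟨(⌊s.1 / η⌋, ⌊s.2 / η⌋), mem_pixels_singleton.2 ⟨floor_close _, floor_close _⟩⟩

theorem eventually_mem_pixels_singleton (h : m ∈ pixels η {s}) : ∀ᶠ y in 𝓝 s, m ∈ pixels η {y} := by
  simp only [pixels, Set.mem_preimage, thickening_singleton, Metric.mem_ball] at h ⊢
  exact (isOpen_lt (by fun_prop) continuous_const).mem_nhds h

theorem finite_pixels (hη : 0 < η) (hS : Bornology.IsBounded S) : (pixels η S).Finite := by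
  have hgrid : AntilipschitzWith (Real.toNNReal η⁻¹) (gridPoint η) := by
    refine AntilipschitzWith.of_le_mul_dist fun m n => ?_
    rw [Real.coe_toNNReal _ (inv_nonneg.2 hη.le), gridPoint, gridPoint, Prod.dist_eq, Prod.dist_eq]
    simp only [Real.dist_eq, Int.dist_eq, ← mul_sub, abs_mul, abs_of_pos hη,
      ← mul_max_of_nonneg _ _ hη.le]
    rw [inv_mul_cancel_left₀ hη.ne']
  exact (hgrid.isBounded_preimage hS.thickening).isCompact_closure.finite_of_discrete.subset
    subset_closure

theorem LatticeAdj.right (a b : ℤ) : LatticeAdj (a, b) (a + 1, b) :=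
  ⟨((a, b), true), by simp [LatticeEdge.ends, LatticeEdge.step]⟩

theorem LatticeAdj.up (a b : ℤ) : LatticeAdj (a, b) (a, b + 1) :=
  ⟨((a, b), false), by simp [LatticeEdge.ends, LatticeEdge.step]⟩

theorem latticeJoined_of_mem_pixels_singleton (hm : m ∈ pixels η {s}) (hn : n ∈ pixels η {s}) :
    LatticeJoined (pixels η {s}) m n := by
  have neighbours {a b : ℤ} {x : ℝ} (ha : dist (η * a) x < η) (hb : dist (η * b) x < η) :
      a = b ∨ b = a + 1 ∨ a = b + 1 := by
    have hη : 0 < η := dist_nonneg.trans_lt ha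
    have hab : |η * (a - b)| < η * 2 := by
      rw [mul_sub, ← Real.dist_eq]
      linarith [dist_triangle_right (η * a) (η * b) x]
    rw [abs_mul, abs_of_pos hη, mul_lt_mul_iff_right₀ hη, abs_lt] at hab
    have hlt : -2 < a - b ∧ a - b < 2 := by exact_mod_cast hab
    lia
  obtain ⟨⟨a, b⟩, c, d⟩ := m, n
  have corner : (c, b) ∈ pixels η {s} :=
    mem_pixels_singleton.2 ⟨(mem_pixels_singleton.1 hn).1, (mem_pixels_singleton.1 hm).2⟩
  have horizontal : LatticeJoined (pixels η {s}) (a, b) (c, b) := by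
    rcases neighbours (mem_pixels_singleton.1 hm).1 (mem_pixels_singleton.1 hn).1 with
      rfl | rfl | rfl
    exacts [.refl, .single ⟨.right a b, hm, corner⟩,
      .single ⟨(LatticeAdj.right c b).symm, hm, corner⟩]
  have vertical : LatticeJoined (pixels η {s}) (c, b) (c, d) := by
    rcases neighbours (mem_pixels_singleton.1 hm).2 (mem_pixels_singleton.1 hn).2 with
      rfl | rfl | rfl
    exacts [.refl, .single ⟨.up c b, corner, hn⟩, .single ⟨(LatticeAdj.up c d).symm, corner, hn⟩]
  exact horizontal.trans vertical

theorem isLatticeConnected_pixels (hη : 0 < η) (hS : IsPreconnected S) :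
    IsLatticeConnected (pixels η S) := by
  have joined_singleton {x : ℝ × ℝ} (hx : x ∈ S) {a b : ℤ × ℤ} (ha : a ∈ pixels η {x})
      (hb : b ∈ pixels η {x}) : LatticeJoined (pixels η S) a b :=
    (latticeJoined_of_mem_pixels_singleton ha hb).mono
      (pixels_mono (Set.singleton_subset_iff.2 hx))
  have joined_points (x y : ℝ × ℝ) (hx : x ∈ S) (hy : y ∈ S) : ∀ a ∈ pixels η {x},
      ∀ b ∈ pixels η {y}, LatticeJoined (pixels η S) a b := by
    refine hS.induction₂' (fun x y => ∀ a ∈ pixels η {x}, ∀ b ∈ pixels η {y},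
      LatticeJoined (pixels η S) a b) (fun x hx => ?_) (fun x y z _ _ _ hxy hyz a ha c hc => ?_)
      hx hy
    · obtain ⟨c, hc⟩ := pixels_singleton_nonempty hη x
      filter_upwards [nhdsWithin_le_nhds (eventually_mem_pixels_singleton hc),
        self_mem_nhdsWithin] with y hcy hy
      have joined (a) (ha : a ∈ pixels η {x}) (b) (hb : b ∈ pixels η {y}) :
          LatticeJoined (pixels η S) a b :=
        (joined_singleton hx ha hc).trans (joined_singleton hy hcy hb)
      exact ⟨joined, fun b hb a ha => (joined a ha b hb).symm⟩
    · obtain ⟨b, hb⟩ := pixels_singleton_nonempty hη y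
      exact (hxy a ha b hb).trans (hyz b hb c hc)
  intro a ha b hb
  obtain ⟨x, hx, hax⟩ := mem_pixels_iff_exists.1 ha
  obtain ⟨y, hy, hby⟩ := mem_pixels_iff_exists.1 hb
  exact joined_points x y hx hy a hax b hby

theorem exists_pos_forall_disjoint_thickening {ι X : Type*} [Finite ι] [MetricSpace X]
    {K : ι → Set X} (hK : ∀ i, IsCompact (K i)) :
    ∃ η > 0, ∀ i j, Disjoint (K i) (K j) → Disjoint (thickening η (K i)) (thickening η (K j)) := by
  have eventually_disjoint (i j : ι) : ∀ᶠ η in 𝓝[>] (0 : ℝ),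
      Disjoint (K i) (K j) → Disjoint (thickening η (K i)) (thickening η (K j)) := by
    by_cases hij : Disjoint (K i) (K j)
    · obtain ⟨δ, hδ, hδij⟩ := hij.exists_thickenings (hK i) (hK j).isClosed
      filter_upwards [Ioo_mem_nhdsGT hδ] with η hη _
      exact hδij.mono (thickening_mono hη.2.le _) (thickening_mono hη.2.le _)
    · exact .of_forall fun _ h => absurd h hij
  obtain ⟨η, hη, hpos⟩ := ((eventually_all.2 fun i => eventually_all.2 (eventually_disjoint i)).and
    self_mem_nhdsWithin).exists
  exact ⟨η, hpos, hη⟩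

theorem IsHalfArcDrawing.exists_pixels {E V : Type*} [Finite E] [Finite V] {tip : E → Bool → V}
    {point : V → ℝ × ℝ} {arm : E → Bool → Set (ℝ × ℝ)} (h : IsHalfArcDrawing tip point arm)
    (harm : ∀ e b, IsCompact (arm e b)) :
    ∃ η > 0, ∃ pixel : V → ℤ × ℤ,
      IsHalfArcDrawing tip pixel fun e b => pixels η (arm e b) := by
  let K : (E × Bool) ⊕ V → Set (ℝ × ℝ) := Sum.elim (fun i => arm i.1 i.2) fun v => {point v}
  obtain ⟨η, hη, hK⟩ := exists_pos_forall_disjoint_thickening (K := K) <|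
    Sum.rec (fun i => harm i.1 i.2) fun _ => isCompact_singleton
  have hdisj (i j) (hij : Disjoint (K i) (K j)) : Disjoint (pixels η (K i)) (pixels η (K j)) :=
    (hK i j hij).preimage _
  choose pixel hpixel using fun v => pixels_singleton_nonempty hη (point v)
  refine ⟨η, hη, pixel, h.tip_ne, fun e b => ?_, fun e b v hv => ?_, fun e => ?_,
    fun e e' b b' hne htip => hdisj (.inl (e, b)) (.inl (e', b')) (h.disjoint e e' b b' hne htip)⟩
  · exact pixels_mono (Set.singleton_subset_iff.2 (h.point_mem e b)) (hpixel _)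
  · refine h.eq_tip e b v (by_contra fun hnot => ?_)
    exact Set.disjoint_left.1 (hdisj (.inr v) (.inl (e, b)) (Set.disjoint_singleton_left.2 hnot))
      (hpixel v) hv
  · obtain ⟨s, hs⟩ := h.inter_nonempty e
    obtain ⟨m, hm⟩ := pixels_singleton_nonempty hη s
    exact ⟨m, pixels_mono (Set.singleton_subset_iff.2 hs.1) hm,
      pixels_mono (Set.singleton_subset_iff.2 hs.2) hm⟩

end Discretization

section PlanarMinor

/-- The half of the arc `γ` from parameter `0` to `1/2` (for `false`) or from `1/2` to `1`. -/
noncomputable def halfArc (γ : Set.Icc (0 : ℝ) 1 → ℝ × ℝ) (b : Bool) : Set (ℝ × ℝ) :=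
  (γ ∘ Set.projIcc 0 1 zero_le_one) '' bif b then Set.Icc (1 / 2) 1 else Set.Icc 0 (1 / 2)

theorem halfArc_subset_range (γ : Set.Icc (0 : ℝ) 1 → ℝ × ℝ) (b : Bool) :
    halfArc γ b ⊆ Set.range γ :=
  (Set.image_subset_range _ _).trans (Set.range_comp_subset_range _ _)

theorem isCompact_halfArc {γ : Set.Icc (0 : ℝ) 1 → ℝ × ℝ} (hγ : Continuous γ) (b : Bool) :
    IsCompact (halfArc γ b) := by
  refine IsCompact.image ?_ (hγ.comp continuous_projIcc)
  cases b <;> exact isCompact_Icc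

theorem isPreconnected_halfArc {γ : Set.Icc (0 : ℝ) 1 → ℝ × ℝ} (hγ : Continuous γ) (b : Bool) :
    IsPreconnected (halfArc γ b) := by
  refine IsPreconnected.image ?_ _ (hγ.comp continuous_projIcc).continuousOn
  cases b <;> exact isPreconnected_Icc

theorem halfArc_inter_nonempty (γ : Set.Icc (0 : ℝ) 1 → ℝ × ℝ) :
    (halfArc γ false ∩ halfArc γ true).Nonempty :=
  ⟨_, ⟨1 / 2, by norm_num, rfl⟩, 1 / 2, by norm_num, rfl⟩

theorem end_mem_halfArc (γ : Set.Icc (0 : ℝ) 1 → ℝ × ℝ) (b : Bool) :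
    γ (bif b then 1 else 0) ∈ halfArc γ b := by
  cases b
  · exact ⟨0, by norm_num, congrArg γ (Set.projIcc_left zero_le_one)⟩
  · exact ⟨1, by norm_num, congrArg γ (Set.projIcc_right zero_le_one)⟩

theorem eq_end_of_mem_halfArc {γ : Set.Icc (0 : ℝ) 1 → ℝ × ℝ} {p : ℝ × ℝ} {b : Bool}
    (hint : ∀ t : Set.Icc (0 : ℝ) 1, (t : ℝ) ≠ 0 → (t : ℝ) ≠ 1 → γ t ≠ p)
    (hp : p ∈ halfArc γ b) : p = γ (bif b then 1 else 0) := by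
  obtain ⟨t, ht, rfl⟩ := hp
  have ht01 : t ∈ Set.Icc (0 : ℝ) 1 := by
    cases b <;> simp only [cond_true, cond_false, Set.mem_Icc] at ht ⊢ <;> constructor <;> linarith
  have hends : t = 0 ∨ t = 1 := by
    by_contra! hne
    exact hint _ hne.1 hne.2 (congrArg γ (Set.projIcc_of_mem zero_le_one ht01).symm)
  rw [Function.comp_apply, Set.projIcc_of_mem zero_le_one ht01]
  cases b <;> rcases hends with rfl | rfl <;> first | rfl | norm_num at ht

variable {V : Type*} {G : SimpleGraph V}

theorem IsPlanar.exists_isHalfArcDrawing (hG : IsPlanar G) :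
    ∃ (tip : G.edgeSet → Bool → V) (point : V → ℝ × ℝ) (arm : G.edgeSet → Bool → Set (ℝ × ℝ)),
      IsHalfArcDrawing tip point arm ∧ (∀ e b, IsCompact (arm e b)) ∧
      (∀ e b, IsPreconnected (arm e b)) ∧ ∀ e, s(tip e false, tip e true) = e := by
  obtain ⟨f, γ, hf, hγ, hends, -, hint, hmeet⟩ := hG
  choose u v huv hu hv using hends
  let tip (e : G.edgeSet) (b : Bool) : V := bif b then v e else u e
  have point_tip (e : G.edgeSet) : ∀ b, γ e (bif b then 1 else 0) = f (tip e b) :=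
    Bool.rec (hu e) (hv e)
  have eq_tip (e : G.edgeSet) (b : Bool) (w : V) (hw : f w ∈ halfArc (γ e) b) : w = tip e b :=
    hf ((eq_end_of_mem_halfArc (hint e · · · w) hw).trans (point_tip e b))
  refine ⟨tip, f, fun e => halfArc (γ e), ⟨fun e => ?_, fun e b => ?_, eq_tip, fun e => ?_, ?_⟩,
    fun e => isCompact_halfArc (hγ e), fun e => isPreconnected_halfArc (hγ e),
    fun e => (huv e).symm⟩
  · exact G.ne_of_adj (G.mem_edgeSet.1 (huv e ▸ e.2))
  · exact point_tip e b ▸ end_mem_halfArc (γ e) b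
  · exact halfArc_inter_nonempty (γ e)
  · refine fun e e' b b' hne htip => Set.disjoint_left.2 fun p hp hp' => htip ?_
    obtain ⟨s, rfl⟩ := halfArc_subset_range _ _ hp
    obtain ⟨t, ht⟩ := halfArc_subset_range _ _ hp'
    obtain ⟨w, hw⟩ := hmeet e e' hne s t ht.symm
    rw [← hw] at hp hp'
    exact (eq_tip e b w hp).symm.trans (eq_tip e' b' w hp')

theorem IsPlanar.exists_isLatticeMinor [Finite V] (hG : IsPlanar G) : ∃ D, IsLatticeMinor G D := by
  obtain ⟨tip, point, arm, hdraw, hcompact, hconn, htip⟩ := hG.exists_isHalfArcDrawing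
  obtain ⟨η, hη, pixel, hpixel⟩ := hdraw.exists_pixels hcompact
  exact hpixel.exists_isLatticeMinor (fun e b => finite_pixels hη (hcompact e b).isBounded)
    (fun e b => isLatticeConnected_pixels hη (hconn e b)) fun e => ⟨e, htip e⟩

end PlanarMinor

section EdgeBound

open Finset

section CycleSpace

variable {V : Type*} {G : SimpleGraph V} [Fintype G.edgeSet] {w : G.edgeSet → ZMod 2}

theorem exists_adj_of_mem_cycleSpace (hw : w ∈ cycleSpace ((↑) : G.edgeSet → Sym2 V)) {u v : V}
    {huv : G.Adj u v} (hne : w ⟨s(u, v), huv⟩ ≠ 0) :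
    ∃ (x : V) (hvx : G.Adj v x), x ≠ u ∧ w ⟨s(v, x), hvx⟩ ≠ 0 := by
  by_contra! hall
  have hsum := DFunLike.congr_fun (mem_cycleSpace.1 hw) v
  rw [Finsupp.finsetSum_apply, sum_eq_single (⟨s(u, v), huv⟩ : G.edgeSet), Finsupp.smul_apply,
    boundary_apply_of_mem (Sym2.mem_mk_right u v) (Sym2.mk_isDiag_iff.not.2 huv.ne), smul_eq_mul,
    mul_one] at hsum
  · exact hne hsum
  · rintro ⟨e, he⟩ - hee
    rw [Finsupp.smul_apply]
    by_cases hv : v ∈ e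
    · obtain ⟨x, rfl⟩ := hv
      rw [hall x he fun hxu => hee (Subtype.ext (hxu ▸ Sym2.eq_swap)), zero_smul]
    · rw [boundary_apply_of_notMem hv, smul_zero]
  · exact fun h => absurd (mem_univ _) h

theorem four_le_card_support_of_mem_cycleSpace (hG : G.CliqueFree 3)
    (hw : w ∈ cycleSpace ((↑) : G.edgeSet → Sym2 V)) (hne : w ≠ 0) : 4 ≤ #{e | w e ≠ 0} := by
  classical
  obtain ⟨⟨e, he⟩, hwe⟩ := Function.ne_iff.1 hne
  induction e with
  | h a b =>
    have hba : w ⟨s(b, a), he.symm⟩ ≠ 0 :=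
      (congrArg w (Subtype.ext Sym2.eq_swap)).trans_ne hwe
    obtain ⟨c, hbc, hca, hwc⟩ := exists_adj_of_mem_cycleSpace hw hwe
    obtain ⟨d, had, hdb, hwd⟩ := exists_adj_of_mem_cycleSpace hw hba
    obtain ⟨x, hcx, hxb, hwx⟩ := exists_adj_of_mem_cycleSpace hw hwc
    have hcd : c ≠ d := by
      rintro rfl
      exact hG {a, b, c} (is3Clique_triple_iff.2 ⟨he, had, hbc⟩)
    have hab : a ≠ b := G.ne_of_adj he
    let support : Finset G.edgeSet :=
      {⟨s(a, b), he⟩, ⟨s(b, c), hbc⟩, ⟨s(a, d), had⟩, ⟨s(c, x), hcx⟩}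
    have hcard : #support = 4 := by
      simp only [support]
      rw [card_insert_of_notMem, card_insert_of_notMem, card_insert_of_notMem, card_singleton] <;>
        grind [hbc.ne]
    rw [← hcard]
    refine card_le_card fun e he => ?_
    simp only [support, mem_insert, mem_singleton] at he
    rw [mem_filter]
    rcases he with rfl | rfl | rfl | rfl
    exacts [⟨mem_univ _, hwe⟩, ⟨mem_univ _, hwc⟩, ⟨mem_univ _, hwd⟩, ⟨mem_univ _, hwx⟩]

end CycleSpace

theorem IsPlanar.ncard_edgeSet_add_four_le {V : Type*} {G : SimpleGraph V} [Finite V]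
    (hG : IsPlanar G) (hfree : G.CliqueFree 3) (hV : 3 ≤ Nat.card V) :
    G.edgeSet.ncard + 4 ≤ 2 * Nat.card V := by
  have := Fintype.ofFinite V
  have := Fintype.ofFinite G.edgeSet
  rw [Nat.card_eq_fintype_card] at hV ⊢
  have : Nonempty V := Fintype.card_pos_iff.1 (by lia)
  rw [← Nat.card_coe_set_eq, Nat.card_eq_fintype_card]
  obtain ⟨D, hD⟩ := hG.exists_isLatticeMinor
  obtain ⟨Q, l, r, hdual⟩ := hD.exists_isAlgebraicDual
  have := hdual.card_lt_or_mul_card_le fun w hw hne =>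
    four_le_card_support_of_mem_cycleSpace hfree hw hne
  lia

end EdgeBound

section PlanarUnion

variable {V W : Type*}

theorem IsPlanar.of_hom {G : SimpleGraph V} {H : SimpleGraph W} (hH : IsPlanar H) (φ : G →g H)
    (hφ : Function.Injective φ) : IsPlanar G := by
  obtain ⟨f, γ, hf, hγ, hends, hinj, hint, hmeet⟩ := hH
  have ends_mem (e : G.edgeSet) : ∃ u v, e.1 = s(u, v) ∧
      γ (φ.mapEdgeSet e) 0 = f (φ u) ∧ γ (φ.mapEdgeSet e) 1 = f (φ v) := by
    obtain ⟨⟨a, b⟩, hab⟩ := e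
    obtain ⟨u, v, he, hu, hv⟩ := hends (φ.mapEdgeSet ⟨s(a, b), hab⟩)
    rcases Sym2.eq_iff.1 he with ⟨rfl, rfl⟩ | ⟨rfl, rfl⟩
    exacts [⟨a, b, rfl, hu, hv⟩, ⟨b, a, Sym2.eq_swap, hu, hv⟩]
  refine ⟨f ∘ φ, γ ∘ φ.mapEdgeSet, hf.comp hφ, fun e => hγ _, ends_mem, fun e => hinj _,
    fun e t h0 h1 v => hint _ t h0 h1 _, fun e e' hne s t hst => ?_⟩
  obtain ⟨w, hw⟩ := hmeet _ _ ((Hom.mapEdgeSet.injective φ hφ).ne hne) s t hst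
  have hs : s = 0 ∨ s = 1 := by
    by_contra! hs
    exact hint _ s (Subtype.coe_ne_coe.2 hs.1) (Subtype.coe_ne_coe.2 hs.2) w hw.symm
  obtain ⟨u, v, -, hu, hv⟩ := ends_mem e
  rcases hs with rfl | rfl
  exacts [⟨u, hu.symm⟩, ⟨v, hv.symm⟩]

/-- `G` is the union of `n` planar subgraphs. -/
def IsPlanarUnion (G : SimpleGraph V) (n : ℕ) : Prop :=
  ∃ H : Fin n → SimpleGraph V, (∀ i, H i ≤ G) ∧ (∀ i, IsPlanar (H i)) ∧ (⨆ i, H i) = G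

variable {G : SimpleGraph V} {n : ℕ}

theorem IsPlanarUnion.comap {f : W → V} (h : IsPlanarUnion G n) (hf : Function.Injective f) :
    IsPlanarUnion (G.comap f) n := by
  obtain ⟨H, hle, hplanar, rfl⟩ := h
  refine ⟨fun i => (H i).comap f, fun i _ _ h => hle i h,
    fun i => (hplanar i).of_hom (Hom.comap f (H i)) hf, ?_⟩
  ext a b
  simp only [iSup_adj, comap_adj]

theorem IsPlanarUnion.ncard_edgeSet_le [Finite V] (h : IsPlanarUnion G n) (hfree : G.CliqueFree 3)
    (hV : 3 ≤ Nat.card V) : G.edgeSet.ncard ≤ n * (2 * Nat.card V - 4) := by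
  obtain ⟨H, hle, hplanar, hsup⟩ := h
  calc G.edgeSet.ncard = (⋃ i, (H i).edgeSet).ncard := by rw [← edgeSet_iSup, hsup]
    _ ≤ ∑ i, (H i).edgeSet.ncard := Set.ncard_iUnion_le_of_fintype _
    _ ≤ ∑ _ : Fin n, (2 * Nat.card V - 4) := Finset.sum_le_sum fun i _ =>
        Nat.le_sub_of_add_le ((hplanar i).ncard_edgeSet_add_four_le (hfree.anti (hle i)) hV)
    _ = n * (2 * Nat.card V - 4) := by
      rw [Finset.sum_const, Finset.card_univ, Fintype.card_fin, smul_eq_mul]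

theorem IsPlanarUnion.mul_card_le [Finite V] [Finite W]
    (h : IsPlanarUnion (completeBipartiteGraph V W) n) (hcard : 3 ≤ Nat.card V + Nat.card W) :
    Nat.card V * Nat.card W ≤ n * (2 * (Nat.card V + Nat.card W) - 4) := by
  have hfree : (completeBipartiteGraph V W).CliqueFree 3 :=
    Colorable.cliqueFree (CompleteBipartiteGraph.bicoloring V W).colorable (by simp)
  rw [← Nat.card_sum] at hcard ⊢
  have hncard : (completeBipartiteGraph V W).edgeSet.ncard = Nat.card V * Nat.card W := by
    rw [Set.ncard, encard_edgeSet_completeBipartiteGraph, ENat.toNat_mul, Nat.card, Nat.card]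
    rfl
  exact hncard ▸ h.ncard_edgeSet_le hfree hcard

end PlanarUnion

section StraightLine

/-- Twice the signed area of the triangle `p q r`, positive when it is traversed anticlockwise. -/
def signedArea {R : Type*} [CommRing R] (p q r : R × R) : R :=
  (q.1 - p.1) * (r.2 - p.2) - (q.2 - p.2) * (r.1 - p.1)

theorem signedArea_swap {R : Type*} [CommRing R] (p q r : R × R) :
    signedArea q p r = -signedArea p q r := by
  simp only [signedArea]
  ring

section Segment

variable {p q r s x : ℝ × ℝ}

theorem signedArea_lineMap (p q r s : ℝ × ℝ) (t : ℝ) :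
    signedArea p q (AffineMap.lineMap r s t) =
      AffineMap.lineMap (signedArea p q r) (signedArea p q s) t := by
  simp only [signedArea, AffineMap.lineMap_apply_module, Prod.fst_add, Prod.snd_add, Prod.smul_fst,
    Prod.smul_snd, smul_eq_mul]
  ring

theorem signedArea_eq_zero_of_mem_segment (hx : x ∈ segment ℝ p q) : signedArea p q x = 0 := by
  rw [segment_eq_image_lineMap] at hx
  obtain ⟨t, -, rfl⟩ := hx
  rw [signedArea_lineMap]
  simp [signedArea, mul_comm]

theorem eq_of_mem_segment_of_mem_segment (hq : x ∈ segment ℝ p q) (hr : x ∈ segment ℝ p r)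
    (h : signedArea p q r ≠ 0) : x = p := by
  have harea := signedArea_eq_zero_of_mem_segment hq
  rw [segment_eq_image_lineMap] at hr
  obtain ⟨t, -, rfl⟩ := hr
  rw [signedArea_lineMap, signedArea_eq_zero_of_mem_segment (left_mem_segment ℝ p q),
    AffineMap.lineMap_apply_module, smul_zero, zero_add] at harea
  rw [(smul_eq_zero.1 harea).resolve_right h, AffineMap.lineMap_apply_zero]

theorem signedArea_mul_nonpos (hpq : x ∈ segment ℝ p q) (hrs : x ∈ segment ℝ r s) :
    signedArea p q r * signedArea p q s ≤ 0 := by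
  have hzero : 0 ∈ segment ℝ (signedArea p q r) (signedArea p q s) := by
    rw [segment_eq_image_lineMap] at hrs ⊢
    obtain ⟨t, ht, rfl⟩ := hrs
    exact ⟨t, ht, by
      rw [← signedArea_lineMap, signedArea_eq_zero_of_mem_segment hpq]⟩
  rw [segment_eq_uIcc, Set.mem_uIcc] at hzero
  rcases hzero with ⟨hr, hs⟩ | ⟨hs, hr⟩
  exacts [mul_nonpos_of_nonpos_of_nonneg hr hs, mul_nonpos_of_nonneg_of_nonpos hr hs]

end Segment

variable {V : Type*} {G : SimpleGraph V}

/-- Joining the points `P v` by straight segments draws `G` without crossings: no vertex lies on the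
line through the ends of an edge not incident with it, and of two disjoint edges one has both ends
strictly on the same side of the line through the other. -/
structure IsStraightLineDrawing {R : Type*} [CommRing R] [LinearOrder R] (G : SimpleGraph V)
    (P : V → R × R) : Prop where
  injective : Function.Injective P
  signedArea_ne_zero {a b c : V} :
    G.Adj a b → c ≠ a → c ≠ b → signedArea (P a) (P b) (P c) ≠ 0
  separated {a b c d : V} : G.Adj a b → G.Adj c d → a ≠ c → a ≠ d → b ≠ c → b ≠ d →
    0 < signedArea (P a) (P b) (P c) * signedArea (P a) (P b) (P d) ∨
      0 < signedArea (P c) (P d) (P a) * signedArea (P c) (P d) (P b)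

theorem isStraightLineDrawing_fromRel {R : Type*} [CommRing R] [LinearOrder R] {r : V → V → Prop}
    {P : V → R × R} (hP : Function.Injective P)
    (hne : ∀ a b, r a b → ∀ c, c ≠ a → c ≠ b → signedArea (P a) (P b) (P c) ≠ 0)
    (hsep : ∀ a b, r a b → ∀ c d, r c d → a ≠ c → a ≠ d → b ≠ c → b ≠ d →
      0 < signedArea (P a) (P b) (P c) * signedArea (P a) (P b) (P d) ∨
        0 < signedArea (P c) (P d) (P a) * signedArea (P c) (P d) (P b)) :
    IsStraightLineDrawing (fromRel r) P where
  injective := hP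
  signedArea_ne_zero {a b c} hab hca hcb := by
    rcases hab with ⟨-, hab | hba⟩
    · exact hne a b hab c hca hcb
    · rw [signedArea_swap, neg_ne_zero]
      exact hne b a hba c hcb hca
  separated {a b c d} hab hcd hac had hbc hbd := by
    rcases hab with ⟨-, hab | hba⟩ <;> rcases hcd with ⟨-, hcd | hdc⟩
    · exact hsep a b hab c d hcd hac had hbc hbd
    · simpa [mul_comm, signedArea_swap (P d)] using hsep a b hab d c hdc had hac hbd hbc
    · simpa [mul_comm, signedArea_swap (P b)] using hsep b a hba c d hcd hbc hbd hac had
    · simpa [mul_comm, signedArea_swap (P b), signedArea_swap (P d)] using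
        hsep b a hba d c hdc hbd hbc had hac

namespace IsStraightLineDrawing

theorem intCast {P : V → ℤ × ℤ} (h : IsStraightLineDrawing G P) :
    IsStraightLineDrawing G fun v => (P v).map ((↑) : ℤ → ℝ) ((↑) : ℤ → ℝ) := by
  have hcast (p q r : ℤ × ℤ) :
      signedArea (p.map ((↑) : ℤ → ℝ) ((↑) : ℤ → ℝ)) (q.map (↑) (↑)) (r.map (↑) (↑)) =
        ((signedArea p q r : ℤ) : ℝ) := by
    simp [signedArea]
  refine ⟨(Int.cast_injective.prodMap Int.cast_injective).comp h.injective, fun hab hca hcb => ?_,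
    fun hab hcd hac had hbc hbd => ?_⟩
  · rw [hcast]
    exact_mod_cast h.signedArea_ne_zero hab hca hcb
  · simp only [hcast]
    exact_mod_cast h.separated hab hcd hac had hbc hbd

variable {P : V → ℝ × ℝ} (h : IsStraightLineDrawing G P)
include h

theorem mem_range_of_mem_segment {a b c d : V} {x : ℝ × ℝ} (hab : G.Adj a b) (hcd : G.Adj c d)
    (hne : s(a, b) ≠ s(c, d)) (hx : x ∈ segment ℝ (P a) (P b)) (hx' : x ∈ segment ℝ (P c) (P d)) :
    x ∈ Set.range P := by
  have mem_range_of_common {a b d : V} (hab : G.Adj a b) (had : G.Adj a d) (hbd : b ≠ d)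
      (hx : x ∈ segment ℝ (P a) (P b)) (hx' : x ∈ segment ℝ (P a) (P d)) : x ∈ Set.range P :=
    ⟨a, (eq_of_mem_segment_of_mem_segment hx hx'
      (h.signedArea_ne_zero hab had.ne.symm hbd.symm)).symm⟩
  by_cases hac : a = c
  · subst hac
    exact mem_range_of_common hab hcd (by grind) hx hx'
  by_cases had : a = d
  · subst had
    rw [segment_symm] at hx'
    exact mem_range_of_common hab hcd.symm (by grind) hx hx'
  rw [segment_symm] at hx
  by_cases hbc : b = c
  · subst hbc
    exact mem_range_of_common hab.symm hcd (by grind) hx hx'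
  by_cases hbd : b = d
  · subst hbd
    rw [segment_symm] at hx'
    exact mem_range_of_common hab.symm hcd.symm (by grind) hx hx'
  rw [segment_symm] at hx
  rcases h.separated hab hcd hac had hbc hbd with hpos | hpos
  exacts [absurd hpos (signedArea_mul_nonpos hx hx').not_gt,
    absurd hpos (signedArea_mul_nonpos hx' hx).not_gt]

theorem isPlanar : IsPlanar G := by
  let ends (e : G.edgeSet) : V × V := Quot.out (e : Sym2 V)
  have hends (e : G.edgeSet) : s((ends e).1, (ends e).2) = e := Quot.out_eq _
  have hadj (e : G.edgeSet) : G.Adj (ends e).1 (ends e).2 := by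
    rw [← mem_edgeSet, hends]
    exact e.2
  let γ (e : G.edgeSet) (t : Set.Icc (0 : ℝ) 1) : ℝ × ℝ :=
    AffineMap.lineMap (P (ends e).1) (P (ends e).2) (t : ℝ)
  have hγ (e t) : γ e t ∈ segment ℝ (P (ends e).1) (P (ends e).2) :=
    lineMap_mem_segment ℝ _ _ t.2
  have hline (e : G.edgeSet) :=
    AffineMap.lineMap_injective ℝ (h.injective.ne (hadj e).ne)
  refine ⟨P, γ, h.injective, fun e => AffineMap.lineMap_continuous.comp continuous_subtype_val,
    fun e => ⟨_, _, (hends e).symm, AffineMap.lineMap_apply_zero ..,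
      AffineMap.lineMap_apply_one ..⟩,
    fun e => (hline e).comp Subtype.val_injective, fun e t h0 h1 v hv => ?_,
    fun e e' hne s t hst => ?_⟩
  · refine h.signedArea_ne_zero (hadj e) (fun hva => h0 (hline e ?_))
      (fun hvb => h1 (hline e ?_)) (signedArea_eq_zero_of_mem_segment (hv ▸ hγ e t))
    · exact hv.trans ((congrArg P hva).trans (AffineMap.lineMap_apply_zero ..).symm)
    · exact hv.trans ((congrArg P hvb).trans (AffineMap.lineMap_apply_one ..).symm)
  · refine h.mem_range_of_mem_segment (hadj e) (hadj e') ?_ (hγ e s) (hst ▸ hγ e' t)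
    rw [hends, hends]
    exact Subtype.coe_ne_coe.2 hne

end IsStraightLineDrawing

end StraightLine

section FourLayers

/-- The vertex of `K_{1,14,14}` heading column `j` of `edgeLayer`: the apex `inl 0` for `j = 0`, and
a vertex of the second part of size 14 otherwise. Row `i` is headed by `inl i`, the apex or a vertex
of the first part of size 14. -/
def columnVertex : Fin 15 → Fin 15 ⊕ Fin 14 :=
  Fin.cons (.inl 0) .inr

/-- Entry `(i, j)` is the index of the layer containing the edge of `K_{1,14,14}` that joins `inl i`
to `columnVertex j`. Every edge occurs exactly once; the entry `(0, 0)` is a loop at the apex and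
has no meaning. -/
def edgeLayer : Matrix (Fin 15) (Fin 15) (Fin 4) :=
  ![![0, 3, 3, 1, 0, 1, 3, 3, 1, 2, 2, 3, 1, 0, 3],
    ![2, 0, 0, 3, 1, 3, 1, 0, 0, 2, 2, 1, 0, 1, 3],
    ![3, 0, 1, 2, 3, 0, 0, 2, 2, 0, 3, 1, 2, 3, 0],
    ![0, 0, 0, 3, 0, 1, 2, 0, 1, 2, 0, 0, 0, 0, 3],
    ![3, 0, 3, 0, 3, 0, 0, 1, 1, 0, 3, 2, 2, 3, 0],
    ![1, 0, 0, 1, 1, 3, 2, 1, 1, 2, 2, 1, 1, 1, 3],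
    ![3, 1, 1, 0, 0, 1, 1, 2, 2, 1, 3, 1, 2, 2, 1],
    ![2, 0, 1, 3, 2, 3, 1, 0, 3, 2, 2, 1, 2, 2, 3],
    ![0, 1, 0, 0, 0, 2, 1, 3, 3, 1, 2, 2, 2, 0, 1],
    ![3, 3, 0, 1, 1, 1, 1, 2, 0, 2, 1, 0, 0, 2, 3],
    ![3, 2, 2, 2, 0, 1, 3, 1, 1, 3, 0, 1, 2, 3, 2],
    ![3, 0, 0, 0, 2, 1, 1, 3, 3, 1, 1, 3, 2, 2, 3],
    ![3, 3, 3, 0, 0, 2, 2, 1, 1, 2, 2, 2, 3, 3, 3],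
    ![3, 0, 2, 3, 1, 0, 1, 3, 3, 3, 0, 2, 3, 3, 3],
    ![3, 2, 2, 2, 0, 0, 3, 2, 1, 2, 0, 2, 1, 3, 2]]

/-- `layerPoint k v` is the position of the vertex `v` in the drawing of layer `k`. -/
def layerPoint : Fin 4 → Fin 15 ⊕ Fin 14 → ℤ × ℤ :=
  ![
    Sum.elim
      ![
        (169, 43), (97, 147), (61, 63), (138, 93), (48, 33), (85, 149), (153, 10), (102, 113),
        (201, 1), (116, 150), (139, 61), (0, 0), (119, 26), (99, 81), (98, 36)]
      ![
        (65, 94), (100, 201), (97, 8), (148, 34), (80, 61), (57, 65), (116, 119), (111, 138),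
        (55, 48), (120, 59), (128, 120), (121, 122), (170, 46), (55, 50)],
    Sum.elim
      ![
        (199, 53), (214, 268), (240, 177), (236, 80), (184, 143), (156, 171), (261, 157),
        (240, 210), (273, 175), (400, 1), (226, 139), (295, 131), (212, 130), (231, 302),
        (200, 86)]
      ![
        (270, 164), (241, 184), (1, 1), (200, 401), (291, 80), (281, 198), (195, 141), (212, 111),
        (281, 163), (333, 89), (217, 194), (185, 112), (193, 216), (273, 177)],
    Sum.elim
      ![
        (301, 9), (347, 8), (242, 116), (366, 15), (232, 63), (356, 10), (145, 170), (201, 17),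
        (246, 42), (200, 401), (242, 77), (97, 66), (332, 31), (256, 60), (299, 74)]
      ![
        (268, 79), (245, 70), (244, 86), (109, 32), (290, 36), (354, 14), (258, 183), (202, 141),
        (400, 0), (305, 18), (279, 50), (186, 79), (0, 1), (267, 74)],
    Sum.elim
      ![
        (528, 310), (682, 118), (270, 227), (681, 115), (329, 469), (699, 123), (402, 283),
        (670, 126), (600, 176), (652, 211), (256, 145), (610, 205), (1001, 0), (526, 74),
        (252, 156)]
      ![
        (770, 141), (501, 1000), (635, 110), (322, 349), (697, 122), (376, 222), (565, 199),
        (622, 143), (299, 110), (383, 333), (562, 249), (782, 51), (1, 1), (725, 121)]]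

/-- The edges of layer `k`, directed from rows to columns. -/
def layerArcs (k : Fin 4) : List ((Fin 15 ⊕ Fin 14) × (Fin 15 ⊕ Fin 14)) :=
  (List.finRange 15 ×ˢ List.finRange 15).filter (fun e => edgeLayer e.1 e.2 = k ∧ e ≠ (0, 0)) |>.map
    (Prod.map .inl columnVertex)

/-- Layer `k` of `K_{1,14,14}`. -/
def layerGraph (k : Fin 4) : SimpleGraph (Fin 15 ⊕ Fin 14) :=
  fromRel fun a b => (a, b) ∈ layerArcs k

theorem layerPoint_injective : ∀ k, Function.Injective (layerPoint k) := by
  decide +kernel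

theorem signedArea_layerPoint_ne_zero : ∀ k, ∀ e ∈ layerArcs k, ∀ c, c ≠ e.1 → c ≠ e.2 →
    signedArea (layerPoint k e.1) (layerPoint k e.2) (layerPoint k c) ≠ 0 := by
  decide +kernel

theorem separated_layerPoint : ∀ k, ∀ e ∈ layerArcs k, ∀ e' ∈ layerArcs k,
    e.1 ≠ e'.1 → e.1 ≠ e'.2 → e.2 ≠ e'.1 → e.2 ≠ e'.2 →
    0 < signedArea (layerPoint k e.1) (layerPoint k e.2) (layerPoint k e'.1) *
      signedArea (layerPoint k e.1) (layerPoint k e.2) (layerPoint k e'.2) ∨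
    0 < signedArea (layerPoint k e'.1) (layerPoint k e'.2) (layerPoint k e.1) *
      signedArea (layerPoint k e'.1) (layerPoint k e'.2) (layerPoint k e.2) := by
  decide +kernel

theorem isPlanar_layerGraph (k : Fin 4) : IsPlanar (layerGraph k) :=
  (isStraightLineDrawing_fromRel (layerPoint_injective k)
    (fun a b hab => signedArea_layerPoint_ne_zero k (a, b) hab)
    fun a b hab c d hcd => separated_layerPoint k (a, b) hab (c, d) hcd).intCast.isPlanar

/-- The index of the part of `K_{1,14,14}` containing a vertex. -/
def part : Fin 15 ⊕ Fin 14 → Fin 3 :=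
  Sum.elim (Fin.cons 0 fun _ => 1) fun _ => 2

theorem part_ne_of_mem_layerArcs : ∀ k, ∀ e ∈ layerArcs k, part e.1 ≠ part e.2 := by
  decide +kernel

theorem mem_layerArcs {e : Fin 15 × Fin 15} (he : e ≠ (0, 0)) :
    (.inl e.1, columnVertex e.2) ∈ layerArcs (edgeLayer e.1 e.2) :=
  List.mem_map_of_mem (List.mem_filter.2
    ⟨List.mem_product.2 ⟨List.mem_finRange _, List.mem_finRange _⟩, by simp [he]⟩)

theorem exists_mem_layerArcs {a b : Fin 15 ⊕ Fin 14} (h : part a ≠ part b) :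
    ∃ k, (a, b) ∈ layerArcs k ∨ (b, a) ∈ layerArcs k := by
  have apex_of_part_ne : ∀ i j : Fin 15, part (.inl i) ≠ part (.inl j) →
      i ≠ 0 ∧ j = 0 ∨ j ≠ 0 ∧ i = 0 := by
    decide
  rcases a with i | y <;> rcases b with j | y'
  · rcases apex_of_part_ne i j h with ⟨hi, rfl⟩ | ⟨hj, rfl⟩
    · exact ⟨_, .inl (mem_layerArcs (e := (i, 0)) (by simp [hi]))⟩
    · exact ⟨_, .inr (mem_layerArcs (e := (j, 0)) (by simp [hj]))⟩
  · exact ⟨_, .inl (mem_layerArcs (e := (i, y'.succ)) (by simp))⟩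
  · exact ⟨_, .inr (mem_layerArcs (e := (j, y.succ)) (by simp))⟩
  · exact absurd rfl h

theorem iSup_layerGraph : ⨆ k, layerGraph k = (⊤ : SimpleGraph (Fin 3)).comap part := by
  ext a b
  rw [iSup_adj]
  constructor
  · rintro ⟨k, -, hab | hba⟩
    exacts [part_ne_of_mem_layerArcs k _ hab, (part_ne_of_mem_layerArcs k _ hba).symm]
  · intro h
    obtain ⟨k, hk⟩ := exists_mem_layerArcs h
    exact ⟨k, ne_of_apply_ne part h, hk⟩

/-- The identification of the vertices of `K_{1,14,14}` with the row and column headings of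
`edgeLayer`. -/
def toHeading : (Σ i, ![Fin 1, Fin 14, Fin 14] i) → Fin 15 ⊕ Fin 14
  | ⟨0, _⟩ => .inl 0
  | ⟨1, x⟩ => .inl (Fin.succ (n := 14) x)
  | ⟨2, y⟩ => .inr y

theorem part_toHeading (v : Σ i, ![Fin 1, Fin 14, Fin 14] i) : part (toHeading v) = v.1 := by
  rcases v with ⟨i, x⟩
  fin_cases i <;> rfl

theorem toHeading_injective : Function.Injective toHeading := by
  rintro ⟨i, x⟩ ⟨j, y⟩ h
  obtain rfl : i = j := by simpa only [part_toHeading] using congrArg part h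
  fin_cases i
  exacts [congrArg (Sigma.mk 0) (Subsingleton.elim (α := Fin 1) x y),
    congrArg (Sigma.mk 1) (Fin.succ_injective 14 (Sum.inl_injective h)),
    congrArg (Sigma.mk 2) (Sum.inr_injective h)]

theorem isPlanarUnion_K1_14_14 :
    IsPlanarUnion (completeMultipartiteGraph ![Fin 1, Fin 14, Fin 14]) 4 := by
  have h : IsPlanarUnion ((⊤ : SimpleGraph (Fin 3)).comap part) 4 :=
    ⟨layerGraph, fun k => iSup_layerGraph ▸ le_iSup layerGraph k, isPlanar_layerGraph,
      iSup_layerGraph⟩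
  have := h.comap toHeading_injective
  rwa [comap_comap, show part ∘ toHeading = Sigma.fst from funext part_toHeading] at this

end FourLayers

theorem four_le_of_isPlanarUnion_K1_14_14 {n : ℕ}
    (h : IsPlanarUnion (completeMultipartiteGraph ![Fin 1, Fin 14, Fin 14]) n) : 4 ≤ n := by
  let f : Fin 14 ⊕ Fin 14 → Σ i, ![Fin 1, Fin 14, Fin 14] i :=
    Sum.elim (fun x => ⟨1, x⟩) (fun y => ⟨2, y⟩)
  have hf : Function.Injective f := by
    rintro (x | x) (y | y) hxy
    · exact congrArg Sum.inl (eq_of_heq (Sigma.mk.inj hxy).2)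
    · exact absurd (congrArg Sigma.fst hxy) (by simp [f])
    · exact absurd (congrArg Sigma.fst hxy) (by simp [f])
    · exact congrArg Sum.inr (eq_of_heq (Sigma.mk.inj hxy).2)
  have hcomap : (completeMultipartiteGraph ![Fin 1, Fin 14, Fin 14]).comap f =
      completeBipartiteGraph (Fin 14) (Fin 14) := by
    ext (x | x) (y | y) <;> simp [f]
  have := (hcomap ▸ h.comap hf).mul_card_le (by simp)
  simp only [Nat.card_eq_fintype_card, Fintype.card_fin] at this
  lia

theorem thickness_K1_14_14 :
    thickness (completeMultipartiteGraph ![Fin 1, Fin 14, Fin 14]) = 4 :=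
  le_antisymm (Nat.sInf_le isPlanarUnion_K1_14_14)
    (le_csInf ⟨4, isPlanarUnion_K1_14_14⟩ fun _ => four_le_of_isPlanarUnion_K1_14_14)
end

section
/- The thickness of the complete tripartite graph K_{2,5,5} equals 2. -/
open SimpleGraph

/-!
Lower bound: `K_{3,3}` is not planar. Regard a drawing as three stars of paths in `ℂ` with common
leaves, where paths of different stars to different leaves are disjoint. Subtracting two such paths
gives a nowhere vanishing function on a square, which has a continuous logarithm. It follows that
twice the linking of two stars is the difference of a quantity attached to each of them, so the
linkings sum to zero around the cycle of the three stars. Their exponentials, however, depend on the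
endpoints only and multiply to `(-1) ^ 9 = -1`.

Upper bound: `K_{2,5,5}` splits into two graphs with straight-line drawings on an integer grid, in
which the absence of crossings is a finite check on signs of determinants.
-/

open scoped unitInterval

section LogIncrement

instance contractibleSpace_unitInterval : ContractibleSpace I :=
  (convex_Icc (0 : ℝ) 1).contractibleSpace ⟨0, unitInterval.zero_mem⟩

instance locallyPathConnectedSpace_unitInterval : LocallyPathConnectedSpace I :=
  (convex_Icc (0 : ℝ) 1).locallyPathConnectedSpace

theorem exists_continuous_log {X : Type*} [TopologicalSpace X] [SimplyConnectedSpace X]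
    [LocallyPathConnectedSpace X] {h : X → ℂ} (hc : Continuous h) (h0 : ∀ x, h x ≠ 0) :
    ∃ L : C(X, ℂ), ∀ x, Complex.exp (L x) = h x := by
  obtain ⟨x₀⟩ : Nonempty X := inferInstance
  obtain ⟨L, ⟨-, hL⟩, -⟩ := Complex.isCoveringMapOn_exp.existsUnique_continuousMap_lifts
    ⟨h, hc⟩ (Complex.exp_log (h0 x₀)) h0
  exact ⟨L, congrFun hL⟩

variable {x x' y y' z : ℂ}

theorem sub_eq_sub_of_exp_eq_exp {L M : C(I, ℂ)} (h : ∀ t, Complex.exp (L t) = Complex.exp (M t)) :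
    L 1 - L 0 = M 1 - M 0 := by
  have exp_sub_zero : Complex.exp (L 0 - M 0) = 1 := by
    rw [Complex.exp_sub, h, div_self (Complex.exp_ne_zero _)]
  have L_eq : ⇑L = fun t ↦ M t + (L 0 - M 0) :=
    Complex.isCoveringMap_exp.eq_of_comp_eq L.continuous (by fun_prop)
      (funext fun t ↦ Subtype.ext (by simp [Complex.exp_add, exp_sub_zero, h t])) 0 (by simp)
  rw [congrFun L_eq 1]
  ring

open Classical in
/-- The increment along `γ` of a continuous logarithm of `γ - z`; its imaginary part is the angle
swept out by `γ` as seen from `z`. The junk value is `0` if `γ` passes through `z`. -/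
noncomputable def logIncrement (γ : Path x y) (z : ℂ) : ℂ :=
  if h : ∃ L : C(I, ℂ), ∀ t, Complex.exp (L t) = γ t - z then h.choose 1 - h.choose 0 else 0

theorem logIncrement_eq {γ : Path x y} {L : C(I, ℂ)} (hL : ∀ t, Complex.exp (L t) = γ t - z) :
    logIncrement γ z = L 1 - L 0 := by
  have exists_log : ∃ L : C(I, ℂ), ∀ t, Complex.exp (L t) = γ t - z := ⟨L, hL⟩
  rw [logIncrement, dif_pos exists_log]
  exact sub_eq_sub_of_exp_eq_exp fun t ↦ by rw [exists_log.choose_spec, hL]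

theorem exp_logIncrement {γ : Path x y} (hz : ∀ t, γ t ≠ z) :
    Complex.exp (logIncrement γ z) = (y - z) / (x - z) := by
  obtain ⟨L, hL⟩ := exists_continuous_log (h := fun t ↦ γ t - z) (by fun_prop)
    fun t ↦ sub_ne_zero.2 (hz t)
  rw [logIncrement_eq hL, Complex.exp_sub, hL, hL, γ.source, γ.target]

-- `p s - q t` does not vanish on the square, so its logarithm has the same increment along both
-- ways from one corner to the opposite one.
theorem logIncrement_add_logIncrement {p : Path x x'} {q : Path y y'} (hpq : ∀ s t, p s ≠ q t) :
    logIncrement p y + logIncrement q x' = logIncrement q x + logIncrement p y' := by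
  obtain ⟨L, hL⟩ := exists_continuous_log (h := fun st : I × I ↦ p st.1 - q st.2) (by fun_prop)
    fun st ↦ sub_ne_zero.2 (hpq st.1 st.2)
  have horizontal (t : I) : logIncrement p (q t) = L (1, t) - L (0, t) :=
    logIncrement_eq (L := ⟨fun s ↦ L (s, t), by fun_prop⟩) fun s ↦ hL (s, t)
  have vertical (s : I) : logIncrement q (p s) = L (s, 1) - L (s, 0) := by
    rw [logIncrement_eq (L := ⟨fun t ↦ L (s, t) + Real.pi * Complex.I, by fun_prop⟩)
      fun t ↦ by simp [Complex.exp_add, hL]]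
    simp
  have h0 := horizontal 0
  have h1 := horizontal 1
  have v0 := vertical 0
  have v1 := vertical 1
  rw [q.source] at h0
  rw [q.target] at h1
  rw [p.source] at v0
  rw [p.target] at v1
  rw [h0, h1, v0, v1]
  ring

end LogIncrement

section Stars

variable {ι : Type*} [Fintype ι] {x y : ℂ} {b : ι → ℂ}

/-- For two stars of paths `p j : x ⟶ b j` and `q j : y ⟶ b j` with common leaves, the logarithmic
increment of the first around the centre of the second minus that of the second around the centre
of the first. -/
noncomputable def starLinking (p : ∀ j, Path x (b j)) (q : ∀ j, Path y (b j)) : ℂ :=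
  ∑ j, (logIncrement (p j) y - logIncrement (q j) x)

/-- The total logarithmic increment of the paths of a star around the leaves of the other paths. -/
noncomputable def leafIncrement [DecidableEq ι] (p : ∀ j, Path x (b j)) : ℂ :=
  ∑ j, ∑ k ∈ Finset.univ.erase j, logIncrement (p j) (b k)

theorem exp_starLinking [Nontrivial ι] {p : ∀ j, Path x (b j)} {q : ∀ j, Path y (b j)}
    (hpq : ∀ j k, j ≠ k → ∀ s t, p j s ≠ q k t) :
    Complex.exp (starLinking p q) =
      (-1) ^ Fintype.card ι * ((∏ j, (b j - y)) / ∏ j, (b j - x)) := by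
  have p_ne (j : ι) (t : I) : p j t ≠ y := by
    obtain ⟨k, hk⟩ := exists_ne j
    simpa using hpq j k hk.symm t 0
  have q_ne (j : ι) (t : I) : q j t ≠ x := by
    obtain ⟨k, hk⟩ := exists_ne j
    simpa using (hpq k j hk 0 t).symm
  have exp_term (j : ι) : Complex.exp (logIncrement (p j) y - logIncrement (q j) x) =
      -1 * ((b j - y) / (b j - x)) := by
    have hxy : x - y ≠ 0 := sub_ne_zero.2 (by simpa using p_ne j 0)
    have hbx : b j - x ≠ 0 := sub_ne_zero.2 (by simpa using q_ne j 1)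
    rw [Complex.exp_sub, exp_logIncrement (p_ne j), exp_logIncrement (q_ne j), ← neg_sub x y]
    field_simp
  rw [starLinking, Complex.exp_sum, Finset.prod_congr rfl fun j _ ↦ exp_term j,
    Finset.prod_mul_distrib, Finset.prod_const, Finset.card_univ, Finset.prod_div_distrib]

theorem card_sub_one_mul_starLinking [DecidableEq ι] {p : ∀ j, Path x (b j)}
    {q : ∀ j, Path y (b j)} (hpq : ∀ j k, j ≠ k → ∀ s t, p j s ≠ q k t) :
    (Fintype.card ι - 1 : ℂ) * starLinking p q = leafIncrement p - leafIncrement q := by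
  have sum_erase_const (f : ι → ℂ) :
      ∑ j, ∑ _k ∈ Finset.univ.erase j, f j = (Fintype.card ι - 1) * ∑ j, f j := by
    rw [Finset.mul_sum]
    refine Finset.sum_congr rfl fun j _ ↦ ?_
    simp [Finset.card_erase_of_mem, Nat.cast_sub (Fintype.card_pos_iff.2 ⟨j⟩)]
  have sum_erase_comm (f : ι → ι → ℂ) :
      ∑ j, ∑ k ∈ Finset.univ.erase j, f j k = ∑ j, ∑ k ∈ Finset.univ.erase j, f k j :=
    Finset.sum_comm' (by simp [eq_comm])
  calc (Fintype.card ι - 1 : ℂ) * starLinking p q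
      = ∑ j, ∑ k ∈ Finset.univ.erase j, (logIncrement (p j) y - logIncrement (q k) x) := by
        simp only [starLinking, Finset.sum_sub_distrib, mul_sub, ← sum_erase_const]
        rw [sum_erase_comm fun _ k ↦ logIncrement (q k) x]
    _ = ∑ j, ∑ k ∈ Finset.univ.erase j, (logIncrement (p j) (b k) - logIncrement (q k) (b j)) := by
        refine Finset.sum_congr rfl fun j _ ↦ Finset.sum_congr rfl fun k hk ↦ ?_
        linear_combination logIncrement_add_logIncrement (hpq j k (Finset.ne_of_mem_erase hk).symm)
    _ = leafIncrement p - leafIncrement q := by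
        simp only [leafIncrement, Finset.sum_sub_distrib]
        rw [sum_erase_comm fun _ k ↦ logIncrement (q k) _]

-- The linking numbers of three stars sum to zero around the cycle, yet their exponentials multiply
-- to `(-1) ^ (3 * n) = -1`, where `n` is the number of leaves.
theorem not_pairwise_disjoint_stars [Nontrivial ι] (hι : Odd (Fintype.card ι)) {a : Fin 3 → ℂ}
    (γ : ∀ i j, Path (a i) (b j)) :
    ¬ ∀ i i' j j', i ≠ i' → j ≠ j' → ∀ s t, γ i j s ≠ γ i' j' t := by
  classical
  intro disjoint
  set linking : Fin 3 → Fin 3 → ℂ := fun i i' ↦ starLinking (γ i) (γ i')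
  have star_disjoint {i i' : Fin 3} (hi : i ≠ i') (j j' : ι) (hj : j ≠ j') :=
    disjoint i i' j j' hi hj
  have sum_eq_zero : linking 0 1 + linking 1 2 + linking 2 0 = 0 := by
    have card_sub_one_ne_zero : (Fintype.card ι - 1 : ℂ) ≠ 0 :=
      sub_ne_zero.2 (mod_cast (Fintype.one_lt_card (α := ι)).ne')
    refine (mul_eq_zero.1 ?_).resolve_left card_sub_one_ne_zero
    linear_combination card_sub_one_mul_starLinking (star_disjoint (i := 0) (i' := 1) (by decide)) +
      card_sub_one_mul_starLinking (star_disjoint (i := 1) (i' := 2) (by decide)) +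
      card_sub_one_mul_starLinking (star_disjoint (i := 2) (i' := 0) (by decide))
  have prod_ne_zero (i : Fin 3) : ∏ j, (b j - a i) ≠ 0 := by
    refine Finset.prod_ne_zero_iff.2 fun j _ ↦ sub_ne_zero.2 ?_
    obtain ⟨i', hi⟩ := exists_ne i
    obtain ⟨j', hj⟩ := exists_ne j
    simpa using disjoint i' i j j' hi hj.symm 1 0
  have exp_sum : Complex.exp (linking 0 1 + linking 1 2 + linking 2 0) = -1 := by
    rw [Complex.exp_add, Complex.exp_add, exp_starLinking (star_disjoint (by decide)),
      exp_starLinking (star_disjoint (by decide)), exp_starLinking (star_disjoint (by decide)),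
      hι.neg_one_pow]
    have := prod_ne_zero 0
    have := prod_ne_zero 1
    have := prod_ne_zero 2
    field_simp
  rw [sum_eq_zero, Complex.exp_zero] at exp_sum
  norm_num at exp_sum

end Stars

section Planarity

variable {V W : Type*} {G : SimpleGraph V} {G' : SimpleGraph W}

theorem mem_edge_of_arc_eq_vertex {X : Type*} {f : V → X} (hf : f.Injective) {e : Sym2 V}
    {γ : I → X} (ends : ∃ u v, e = s(u, v) ∧ γ 0 = f u ∧ γ 1 = f v)
    (interior : ∀ t : I, (t : ℝ) ≠ 0 → (t : ℝ) ≠ 1 → ∀ v, γ t ≠ f v) {t : I} {w : V}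
    (h : γ t = f w) : w ∈ e := by
  obtain ⟨u, v, rfl, h0, h1⟩ := ends
  rcases eq_or_ne t 0 with rfl | t_ne_zero
  · simp [hf (h0.symm.trans h)]
  rcases eq_or_ne t 1 with rfl | t_ne_one
  · simp [hf (h1.symm.trans h)]
  · exact absurd h (interior t (by simpa using t_ne_zero) (by simpa using t_ne_one) w)

theorem exists_path_range_eq {X : Type*} [TopologicalSpace X] {f : V → X} {γ : I → X}
    (hγ : Continuous γ) {u v : V} (ends : ∃ u' v', s(u, v) = s(u', v') ∧ γ 0 = f u' ∧ γ 1 = f v') :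
    ∃ p : Path (f u) (f v), Set.range p = Set.range γ := by
  obtain ⟨u', v', huv, h0, h1⟩ := ends
  obtain ⟨p, range_p⟩ : ∃ p : Path (f u') (f v'), Set.range p = Set.range γ :=
    ⟨⟨⟨γ, hγ⟩, h0, h1⟩, rfl⟩
  rcases Sym2.eq_iff.1 huv with ⟨rfl, rfl⟩ | ⟨rfl, rfl⟩
  · exact ⟨p, range_p⟩
  · exact ⟨p.symm, p.symm_range.trans range_p⟩

theorem IsPlanar.exists_disjoint_paths (hG : IsPlanar G) :
    ∃ (f : V → ℝ × ℝ) (p : ∀ u v, G.Adj u v → Path (f u) (f v)),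
      ∀ u v w x (huv : G.Adj u v) (hwx : G.Adj w x), u ≠ w → u ≠ x → v ≠ w → v ≠ x →
        Disjoint (Set.range (p u v huv)) (Set.range (p w x hwx)) := by
  obtain ⟨f, γ, hf, continuous, ends, -, interior, meet⟩ := hG
  choose p range_p using fun u v (h : G.Adj u v) ↦
    exists_path_range_eq (continuous ⟨s(u, v), h⟩) (ends ⟨s(u, v), h⟩)
  refine ⟨f, p, fun u v w x huv hwx huw hux hvw hvx ↦ ?_⟩
  rw [range_p, range_p, Set.disjoint_left]
  rintro _ ⟨s, rfl⟩ ⟨t, hst⟩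
  obtain ⟨y, hy⟩ := meet ⟨s(u, v), huv⟩ ⟨s(w, x), hwx⟩
    (Subtype.coe_ne_coe.1 (by simp [huw, hux])) s t hst.symm
  have mem_uv : y ∈ s(u, v) := mem_edge_of_arc_eq_vertex hf (ends _) (interior _) hy.symm
  have mem_wx : y ∈ s(w, x) :=
    mem_edge_of_arc_eq_vertex hf (ends _) (interior _) (hst.trans hy.symm)
  simp only [Sym2.mem_iff] at mem_uv mem_wx
  grind

theorem IsPlanar.of_isContained (h : G ⊑ G') (hG' : IsPlanar G') : IsPlanar G := by
  obtain ⟨φ⟩ := h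
  obtain ⟨f, γ, hf, continuous, ends, injective, interior, meet⟩ := hG'
  have ends_comp (e : G.edgeSet) : ∃ u v, (e : Sym2 V) = s(u, v) ∧
      γ (φ.mapEdgeSet e) 0 = f (φ u) ∧ γ (φ.mapEdgeSet e) 1 = f (φ v) := by
    obtain ⟨⟨x, y⟩, hxy⟩ := e
    obtain ⟨u, v, huv, h0, h1⟩ := ends (φ.mapEdgeSet ⟨s(x, y), hxy⟩)
    rcases Sym2.eq_iff.1 (show s(φ x, φ y) = s(u, v) from huv) with ⟨rfl, rfl⟩ | ⟨rfl, rfl⟩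
    · exact ⟨x, y, rfl, h0, h1⟩
    · exact ⟨y, x, Sym2.eq_swap, h0, h1⟩
  refine ⟨f ∘ φ, fun e ↦ γ (φ.mapEdgeSet e), hf.comp φ.injective, fun e ↦ continuous _, ends_comp,
    fun e ↦ injective _, fun e t h0 h1 v ↦ interior _ t h0 h1 _, fun e e' hne s t hst ↦ ?_⟩
  obtain ⟨w, hw⟩ := meet _ _ (φ.mapEdgeSet.injective.ne hne) s t hst
  obtain ⟨v, -, rfl⟩ : ∃ v ∈ (e : Sym2 V), φ v = w :=
    Sym2.mem_map.1 (mem_edge_of_arc_eq_vertex hf (ends _) (interior _) hw.symm)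
  exact ⟨v, hw⟩

theorem not_isPlanar_completeBipartiteGraph_three_three :
    ¬ IsPlanar (completeBipartiteGraph (Fin 3) (Fin 3)) := by
  intro planar
  obtain ⟨f, p, disjoint⟩ := planar.exists_disjoint_paths
  let toComplex : ℝ × ℝ ≃ₜ ℂ := Complex.equivRealProdCLM.symm.toHomeomorph
  have adj (i j : Fin 3) : (completeBipartiteGraph (Fin 3) (Fin 3)).Adj (.inl i) (.inr j) := by simp
  refine not_pairwise_disjoint_stars (by decide)
    (fun i j ↦ (p _ _ (adj i j)).map toComplex.continuous) fun i i' j j' hi hj s t hst ↦ ?_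
  exact Set.disjoint_left.1
    (disjoint _ _ _ _ (adj i j) (adj i' j') (by simpa) (by simp) (by simp) (by simpa))
    ⟨s, rfl⟩ ⟨t, (toComplex.injective hst).symm⟩

end Planarity

section Thickness

variable {V W : Type*} {G : SimpleGraph V} {G' : SimpleGraph W}

/-- `G` is the union of `n` planar subgraphs; the thickness is the least such `n`. -/
def IsUnionOfPlanar (G : SimpleGraph V) (n : ℕ) : Prop :=
  ∃ H : Fin n → SimpleGraph V, (∀ i, H i ≤ G) ∧ (∀ i, IsPlanar (H i)) ∧ (⨆ i, H i) = G

theorem IsUnionOfPlanar.of_iso {n : ℕ} (e : G ≃g G') (h : IsUnionOfPlanar G' n) :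
    IsUnionOfPlanar G n := by
  obtain ⟨H, le, planar, rfl⟩ := h
  refine ⟨fun i ↦ (H i).comap e, fun i u v huv ↦ e.map_adj_iff.1 (le i huv),
    fun i ↦ (planar i).of_isContained (Embedding.comap e.toEmbedding.toEmbedding _).isContained, ?_⟩
  ext u v
  simpa using e.map_adj_iff

theorem thickness_congr (e : G ≃g G') : thickness G = thickness G' := by
  have same_unions (n : ℕ) : IsUnionOfPlanar G n ↔ IsUnionOfPlanar G' n :=
    ⟨.of_iso e.symm, .of_iso e⟩
  exact congrArg sInf (Set.ext same_unions)

theorem thickness_eq_two {H : SimpleGraph V} (hG : ¬ IsPlanar G) (hle : H ≤ G)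
    (hH : IsPlanar H) (hsdiff : IsPlanar (G \ H)) : thickness G = 2 := by
  have union_two : IsUnionOfPlanar G 2 := by
    refine ⟨![H, G \ H], ?_, ?_, ?_⟩
    · simp [Fin.forall_fin_two, hle]
    · simp [Fin.forall_fin_two, hH, hsdiff]
    · simpa [iSup, Matrix.range_cons, Matrix.range_empty] using hle
  refine le_antisymm (Nat.sInf_le union_two) (le_csInf ⟨2, union_two⟩ ?_)
  rintro n ⟨K, -, planar, rfl⟩
  by_contra! hn
  refine hG ?_
  interval_cases n
  · exact hH.of_isContained (.of_le (by simp))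
  · simpa [iSup_unique] using planar 0

end Thickness

section StraightLineDrawing

variable {𝕜 : Type*} [Field 𝕜] [LinearOrder 𝕜] [IsStrictOrderedRing 𝕜]

theorem eq_of_mem_segment_of_mem_segment_s13 {E : Type*} [AddCommGroup E] [Module 𝕜 E] {x y y' z : E}
    (hy : y ∉ segment 𝕜 x y') (hy' : y' ∉ segment 𝕜 x y) (hz : z ∈ segment 𝕜 x y)
    (hz' : z ∈ segment 𝕜 x y') : z = x := by
  rw [mem_segment_iff_wbtw] at *
  by_contra z_ne_x
  have same_ray : SameRay 𝕜 (y -ᵥ x) (y' -ᵥ x) :=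
    hz.sameRay_vsub_left.symm.trans hz'.sameRay_vsub_left
      fun h ↦ absurd (vsub_eq_zero_iff_eq.1 h) z_ne_x
  exact (wbtw_total_of_sameRay_vsub_left same_ray).elim hy hy'

variable {V : Type*} {G : SimpleGraph V}

/-- Placing each vertex `v` at `p v` and drawing each edge as a straight segment is a drawing of `G`
without crossings. Edges with a common end need no separate condition: their segments overlap only
if one of them contains an end of the other. -/
structure IsStraightLineDrawing_s13 (G : SimpleGraph V) (p : V → ℝ × ℝ) : Prop where
  injective : p.Injective
  notMem_segment {u v w : V} : G.Adj u v → w ≠ u → w ≠ v → p w ∉ segment ℝ (p u) (p v)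
  disjoint_segment {u v w x : V} : G.Adj u v → G.Adj w x → u ≠ w → u ≠ x → v ≠ w → v ≠ x →
    Disjoint (segment ℝ (p u) (p v)) (segment ℝ (p w) (p x))

theorem IsStraightLineDrawing_s13.mem_range_of_mem_segment {p : V → ℝ × ℝ}
    (hp : IsStraightLineDrawing_s13 G p) {u v w x : V} (huv : G.Adj u v) (hwx : G.Adj w x)
    (hne : s(u, v) ≠ s(w, x)) {z : ℝ × ℝ} (hz : z ∈ segment ℝ (p u) (p v))
    (hz' : z ∈ segment ℝ (p w) (p x)) : z ∈ Set.range p := by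
  have incident {a b b' : V} (hb : G.Adj a b) (hb' : G.Adj a b') (b_ne : b ≠ b')
      (hz : z ∈ segment ℝ (p a) (p b)) (hz' : z ∈ segment ℝ (p a) (p b')) : z ∈ Set.range p :=
    ⟨a, (eq_of_mem_segment_of_mem_segment_s13 (hp.notMem_segment hb' hb.ne' b_ne)
      (hp.notMem_segment hb hb'.ne' b_ne.symm) hz hz').symm⟩
  by_cases huw : u = w
  · subst huw
    exact incident huv hwx (by grind) hz hz'
  by_cases hux : u = x
  · subst hux
    exact incident huv hwx.symm (by grind) hz (segment_symm ℝ (p w) _ ▸ hz')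
  by_cases hvw : v = w
  · subst hvw
    exact incident huv.symm hwx (by grind) (segment_symm ℝ (p u) _ ▸ hz) hz'
  by_cases hvx : v = x
  · subst hvx
    exact incident huv.symm hwx.symm (by grind) (segment_symm ℝ (p u) _ ▸ hz)
      (segment_symm ℝ (p w) _ ▸ hz')
  · exact (Set.disjoint_left.1 (hp.disjoint_segment huv hwx huw hux hvw hvx) hz hz').elim

theorem IsStraightLineDrawing_s13.isPlanar {p : V → ℝ × ℝ} (hp : IsStraightLineDrawing_s13 G p) :
    IsPlanar G := by
  have exists_ends (e : G.edgeSet) : ∃ u v, (e : Sym2 V) = s(u, v) ∧ G.Adj u v := by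
    obtain ⟨⟨u, v⟩, huv⟩ := e
    exact ⟨u, v, rfl, huv⟩
  choose a b hab adj using exists_ends
  have p_ne (e : G.edgeSet) : p (a e) ≠ p (b e) := hp.injective.ne (adj e).ne
  let arc (e : G.edgeSet) (t : I) : ℝ × ℝ := AffineMap.lineMap (p (a e)) (p (b e)) (t : ℝ)
  have arc_mem (e : G.edgeSet) (t : I) : arc e t ∈ segment ℝ (p (a e)) (p (b e)) := by
    rw [segment_eq_image_lineMap]
    exact Set.mem_image_of_mem _ t.2
  refine ⟨p, arc, hp.injective, fun e ↦ ?_, fun e ↦ ⟨a e, b e, hab e, ?_, ?_⟩, fun e ↦ ?_, ?_, ?_⟩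
  · exact AffineMap.lineMap_continuous.comp continuous_subtype_val
  · exact AffineMap.lineMap_apply_zero _ _
  · exact AffineMap.lineMap_apply_one _ _
  · exact (AffineMap.lineMap_injective ℝ (p_ne e)).comp Subtype.val_injective
  · intro e t t_ne_zero t_ne_one v arc_eq
    refine hp.notMem_segment (adj e) ?_ ?_ (arc_eq ▸ arc_mem e t)
    · rintro rfl
      exact (AffineMap.lineMap_eq_left_iff.1 arc_eq).elim (p_ne e) t_ne_zero
    · rintro rfl
      exact (AffineMap.lineMap_eq_right_iff.1 arc_eq).elim (p_ne e) t_ne_one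
  · intro e e' hne s t arc_eq
    exact hp.mem_range_of_mem_segment (adj e) (adj e')
      (hab e ▸ hab e' ▸ Subtype.coe_ne_coe.2 hne) (arc_mem e s) (arc_eq ▸ arc_mem e' t)

/-- Twice the signed area of the triangle `p q r`; its sign tells on which side of the line through
`p` and `q` the point `r` lies. -/
def orient {R : Type*} [CommRing R] (p q r : R × R) : R :=
  (q.1 - p.1) * (r.2 - p.2) - (q.2 - p.2) * (r.1 - p.1)

theorem orient_map {R S : Type*} [CommRing R] [CommRing S] (f : R →+* S) (p q r : R × R) :
    orient (Prod.map f f p) (Prod.map f f q) (Prod.map f f r) = f (orient p q r) := by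
  simp [orient]

theorem orient_lineMap {R : Type*} [CommRing R] (p q r s : R × R) (t : R) :
    orient p q (AffineMap.lineMap r s t) =
      AffineMap.lineMap (orient p q r) (orient p q s) t := by
  simp only [orient, AffineMap.lineMap_apply_module, Prod.fst_add, Prod.snd_add, Prod.smul_fst,
    Prod.smul_snd, smul_eq_mul]
  ring

theorem orient_mem_segment {p q r s z : 𝕜 × 𝕜} (hz : z ∈ segment 𝕜 r s) :
    orient p q z ∈ segment 𝕜 (orient p q r) (orient p q s) := by
  rw [segment_eq_image_lineMap] at *
  obtain ⟨t, ht, rfl⟩ := hz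
  exact ⟨t, ht, (orient_lineMap p q r s t).symm⟩

theorem orient_eq_zero_of_mem_segment {p q r : 𝕜 × 𝕜} (hr : r ∈ segment 𝕜 p q) :
    orient p q r = 0 := by
  have orient_left : orient p q p = 0 := by simp [orient]
  have orient_right : orient p q q = 0 := by simp [orient, mul_comm]
  simpa [orient_left, orient_right] using orient_mem_segment (p := p) (q := q) hr

/-- The points `r`, `s` lie strictly on one side of the line `p q`, or `p`, `q` strictly on one side
of the line `r s`. This is a decidable criterion for the segments `p q` and `r s` to be disjoint. -/
def IsSeparated {R : Type*} [CommRing R] [LT R] (p q r s : R × R) : Prop :=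
  0 < orient p q r * orient p q s ∨ 0 < orient r s p * orient r s q

instance {R : Type*} [CommRing R] [LT R] [DecidableLT R] (p q r s : R × R) :
    Decidable (IsSeparated p q r s) :=
  inferInstanceAs (Decidable (_ ∨ _))

theorem disjoint_segment_of_orient_mul_pos {p q r s : 𝕜 × 𝕜}
    (h : 0 < orient p q r * orient p q s) : Disjoint (segment 𝕜 p q) (segment 𝕜 r s) := by
  refine Set.disjoint_left.2 fun z hz hz' ↦ ?_
  have zero_mem : 0 ∈ segment 𝕜 (orient p q r) (orient p q s) :=
    orient_eq_zero_of_mem_segment hz ▸ orient_mem_segment hz'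
  rcases mul_pos_iff.1 h with ⟨hr, hs⟩ | ⟨hr, hs⟩
  · exact lt_irrefl 0 ((convex_Ioi 0).segment_subset hr hs zero_mem)
  · exact lt_irrefl 0 ((convex_Iio 0).segment_subset hr hs zero_mem)

theorem IsSeparated.disjoint_segment {p q r s : 𝕜 × 𝕜} (h : IsSeparated p q r s) :
    Disjoint (segment 𝕜 p q) (segment 𝕜 r s) :=
  h.elim disjoint_segment_of_orient_mul_pos fun h ↦ (disjoint_segment_of_orient_mul_pos h).symm

theorem isPlanar_of_orient {p : V → ℤ × ℤ} (hp : p.Injective)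
    (vertex : ∀ u v, G.Adj u v → ∀ w, w ≠ u → w ≠ v → orient (p u) (p v) (p w) ≠ 0)
    (edge : ∀ u v, G.Adj u v → ∀ w x, G.Adj w x → u ≠ w → u ≠ x → v ≠ w → v ≠ x →
      IsSeparated (p u) (p v) (p w) (p x)) : IsPlanar G := by
  let toReal : ℤ × ℤ → ℝ × ℝ := Prod.map (Int.castRingHom ℝ) (Int.castRingHom ℝ)
  have toReal_injective : toReal.Injective := Int.cast_injective.prodMap Int.cast_injective
  have orient_toReal (x y z : ℤ × ℤ) : orient (toReal x) (toReal y) (toReal z) = orient x y z :=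
    orient_map (Int.castRingHom ℝ) x y z
  have isSeparated_toReal {x y z w : ℤ × ℤ} (h : IsSeparated x y z w) :
      IsSeparated (toReal x) (toReal y) (toReal z) (toReal w) := by
    simp only [IsSeparated, orient_toReal]
    exact_mod_cast h
  refine IsStraightLineDrawing_s13.isPlanar (p := toReal ∘ p) ⟨toReal_injective.comp hp,
    fun {u v w} huv hwu hwv hmem ↦ vertex u v huv w hwu hwv ?_,
    fun {u v w x} huv hwx huw hux hvw hvx ↦
      (isSeparated_toReal (edge u v huv w x hwx huw hux hvw hvx)).disjoint_segment⟩
  exact_mod_cast (orient_toReal _ _ _).symm.trans (orient_eq_zero_of_mem_segment hmem)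

end StraightLineDrawing

section CompleteTripartite

theorem nonempty_iso_completeMultipartiteGraph {ι W : Type*} {V : ι → Type*} (part : W → ι)
    (h : ∀ i, Nonempty (V i ≃ {w // part w = i})) :
    Nonempty (completeMultipartiteGraph V ≃g (⊤ : SimpleGraph ι).comap part) := by
  let e (i : ι) : V i ≃ {w // part w = i} := (h i).some
  let φ : (Σ i, V i) ≃ W := (Equiv.sigmaCongrRight e).trans (Equiv.sigmaFiberEquiv part)
  have part_φ (v : Σ i, V i) : part (φ v) = v.1 := (e v.1 v.2).2
  exact ⟨φ, by simp [part_φ]⟩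

/-- The partition of `0, ..., 11` into the intervals `0, 1` and `2, ..., 6` and `7, ..., 11`. -/
def part255 : Fin 12 → Fin 3 := ![0, 0, 1, 1, 1, 1, 1, 2, 2, 2, 2, 2]

/-- The graph `K_{2,5,5}` on the vertices `0, ..., 11`, a model in which finite checks are
decidable. -/
def K255 : SimpleGraph (Fin 12) := (⊤ : SimpleGraph (Fin 3)).comap part255

instance : DecidableRel K255.Adj :=
  inferInstanceAs (DecidableRel ((⊤ : SimpleGraph (Fin 3)).comap part255).Adj)

/-- The first of two planar graphs that decompose `K_{2,5,5}`; the second is its complement in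
`K_{2,5,5}`. The vertex positions used below to draw the two were found by a computer search. -/
def layer : SimpleGraph (Fin 12) := fromRel fun u v ↦ (u, v) ∈ [
  (0, 4), (0, 5), (0, 6), (0, 8), (0, 9), (0, 11), (1, 2), (1, 4), (1, 6), (1, 7), (1, 9), (1, 11),
  (2, 9), (2, 10), (2, 11), (3, 9), (3, 10), (3, 11), (4, 7), (4, 11), (5, 7), (6, 7), (6, 8)]

instance : DecidableRel layer.Adj :=
  inferInstanceAs (DecidableRel (fromRel _).Adj)

theorem nonempty_iso_K255 :
    Nonempty (completeMultipartiteGraph ![Fin 2, Fin 5, Fin 5] ≃g K255) := by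
  refine nonempty_iso_completeMultipartiteGraph part255 fun i ↦ ?_
  match i with
  | 0 => exact ⟨(Fintype.equivFinOfCardEq (by decide)).symm⟩
  | 1 => exact ⟨(Fintype.equivFinOfCardEq (by decide)).symm⟩
  | 2 => exact ⟨(Fintype.equivFinOfCardEq (by decide)).symm⟩

theorem not_isPlanar_K255 : ¬ IsPlanar K255 := by
  have adj : ∀ i j, K255.Adj (![2, 3, 4] i) (![7, 8, 9] j) := by decide
  let f : Fin 3 ⊕ Fin 3 → Fin 12 := Sum.elim ![2, 3, 4] ![7, 8, 9]
  have f_injective : f.Injective := by decide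
  let φ : completeBipartiteGraph (Fin 3) (Fin 3) →g K255 :=
    { toFun := f
      map_rel' := by
        rintro (i | i) (j | j) hij
        · simp at hij
        · exact adj i j
        · exact (adj j i).symm
        · simp at hij }
  exact fun h ↦ not_isPlanar_completeBipartiteGraph_three_three
    (h.of_isContained ⟨⟨φ, f_injective⟩⟩)

theorem layer_le_K255 : layer ≤ K255 := by
  have adj_of_adj : ∀ u v, layer.Adj u v → K255.Adj u v := by decide
  exact fun u v ↦ adj_of_adj u v

theorem isPlanar_layer : IsPlanar layer :=
  isPlanar_of_orient
    (p := ![(6, 0), (0, 7), (1, 5), (1, 1), (4, 5), (5, 4), (6, 7), (4, 6), (7, 6), (0, 0), (3, 2),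
      (5, 2)])
    (by decide +kernel) (by decide +kernel) (by decide +kernel)

theorem isPlanar_K255_sdiff_layer : IsPlanar (K255 \ layer) :=
  isPlanar_of_orient
    (p := ![(0, 4), (1, 4), (6, 0), (2, 3), (7, 5), (3, 5), (6, 5), (5, 1), (7, 0), (5, 3), (3, 7),
      (4, 6)])
    (by decide +kernel) (by decide +kernel) (by decide +kernel)

end CompleteTripartite

theorem thickness_K255 :
    thickness (completeMultipartiteGraph ![Fin 2, Fin 5, Fin 5]) = 2 := by
  obtain ⟨e⟩ := nonempty_iso_K255
  rw [thickness_congr e]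
  exact thickness_eq_two not_isPlanar_K255 layer_le_K255 isPlanar_layer isPlanar_K255_sdiff_layer
end
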